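/- arXiv:1412.5679 — 13 statements merged into one kernel-verified Lean document; each statement's English description precedes it below -/
import Mathlib

section
/- There is an absolute constant C > 0 with the following property. Let p ∈ [0,10] and let g : (0, π) → ℝ be locally absolutely continuous with a.e. derivative g′. Then ∫_0^π |g(θ)|² (sin θ)^p dθ ≤ C ( ∫_0^π |g′(θ)|² (sin θ)^{p+2} dθ + ∫_0^π |g(θ)|² (sin θ)^{p+2} dθ ), where all integrals are allowed to be +∞. -/
open MeasureTheory

/-- `g` is locally absolutely continuous on the set `s` with a.e. derivative `g'`:
`g'` is integrable on compact subintervals of `s` and the fundamental theorem of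
calculus representation holds between any two points of `s`. -/
def LocAC (s : Set ℝ) (f f' : ℝ → ℝ) : Prop :=
  (∀ a ∈ s, ∀ b ∈ s, IntervalIntegrable f' volume a b) ∧
  (∀ a ∈ s, ∀ b ∈ s, f b - f a = ∫ t in a..b, f' t)

lemma hardy_key (p : ℝ) (g g' : ℝ → ℝ) (hp : p ∈ Set.Icc (0 : ℝ) 10)
    (h : LocAC (Set.Ioo 0 Real.pi) g g') (a b : ℝ) (ha : 0 < a) (ha2 : a ≤ Real.pi / 2)
    (hb2 : Real.pi / 2 ≤ b) (hb : b < Real.pi)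
    (hI : IntervalIntegrable (fun θ => (g' θ) ^ 2 * Real.sin θ ^ (p + 2)) volume a b) :
    IntervalIntegrable (fun θ => (g θ) ^ 2 * Real.sin θ ^ p) volume a b ∧
    IntervalIntegrable (fun θ => (g θ) ^ 2 * Real.sin θ ^ (p+2)) volume a b ∧
    (∫ θ in a..b, (g θ) ^ 2 * Real.sin θ ^ p) ≤
      24 * ((∫ θ in a..b, (g' θ) ^ 2 * Real.sin θ ^ (p + 2)) +
        ∫ θ in a..b, (g θ) ^ 2 * Real.sin θ ^ (p + 2)) := by
  obtain ⟨hp0, hp10⟩ := hp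
  obtain ⟨h1, h2⟩ := h
  have hpi := Real.pi_pos
  have hab : a ≤ b := ha2.trans hb2
  have hma : a ∈ Set.Ioo 0 Real.pi := ⟨ha, by linarith⟩
  have hmb : b ∈ Set.Ioo 0 Real.pi := ⟨by linarith, hb⟩
  have hgi := h1 a hma b hmb
  have hsin : ∀ x ∈ Set.Icc a b, 0 < Real.sin x := fun x hx =>
    Real.sin_pos_of_pos_of_lt_pi (lt_of_lt_of_le ha hx.1) (lt_of_le_of_lt hx.2 hb)
  set G : ℝ → ℝ := fun x => g a + ∫ t in a..x, g' t with hG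
  have hGg : ∀ x ∈ Set.Icc a b, g x = G x := by
    intro x hx
    have := h2 a hma x ⟨lt_of_lt_of_le ha hx.1, lt_of_le_of_lt hx.2 hb⟩
    simp only [hG]; linarith
  have hGac : AbsolutelyContinuousOnInterval G a b := by
    have c : AbsolutelyContinuousOnInterval (fun _ : ℝ => g a) a b :=
      (contDiffOn_const).absolutelyContinuousOnInterval
    exact c.add (hgi.absolutelyContinuousOnInterval_intervalIntegral (c := a) (by simp))
  have hGc : ContinuousOn G (Set.uIcc a b) := hGac.continuousOn
  have hgc : ContinuousOn g (Set.uIcc a b) := by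
    refine hGc.congr ?_
    rw [Set.uIcc_of_le hab]; exact hGg
  have hsc : ∀ q : ℝ, ContinuousOn (fun x => Real.sin x ^ q) (Set.uIcc a b) := by
    intro q
    rw [Set.uIcc_of_le hab]
    exact Real.continuous_sin.continuousOn.rpow_const (fun x hx => Or.inl (hsin x hx).ne')
  set w : ℝ → ℝ := fun x => Real.sin x ^ (p + 1) * Real.cos x with hw
  have hwac : AbsolutelyContinuousOnInterval w a b := by
    apply ContDiffOn.absolutelyContinuousOnInterval
    rw [Set.uIcc_of_le hab]
    exact (Real.contDiff_sin.contDiffOn.rpow_const_of_ne (fun x hx => (hsin x hx).ne')).mul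
      Real.contDiff_cos.contDiffOn
  have hFac := (hGac.fun_mul hGac).fun_mul hwac
  set D : ℝ → ℝ := fun x => 2 * (g x * (g' x * (Real.sin x ^ (p+1) * Real.cos x)))
    + (g x) ^ 2 * ((p+1) * Real.sin x ^ p - (p+2) * Real.sin x ^ (p+2)) with hD
  have hi1 : IntervalIntegrable (fun θ => (g θ) ^ 2 * Real.sin θ ^ p) volume a b :=
    ((hgc.pow 2).mul (hsc p)).intervalIntegrable
  have hi2 : IntervalIntegrable (fun θ => (g θ) ^ 2 * Real.sin θ ^ (p+2)) volume a b :=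
    ((hgc.pow 2).mul (hsc (p+2))).intervalIntegrable
  have hDi : IntervalIntegrable D volume a b := by
    apply IntervalIntegrable.add
    · apply IntervalIntegrable.const_mul
      apply IntervalIntegrable.continuousOn_mul _ hgc
      exact hgi.mul_continuousOn ((hsc _).mul Real.continuous_cos.continuousOn)
    · exact ((hgc.pow 2).mul ((continuousOn_const.mul (hsc p)).sub
        (continuousOn_const.mul (hsc (p+2))))).intervalIntegrable
  have hDint : ∫ x in a..b, D x ≤ 0 := by
    have e : ∫ x in a..b, D x = ∫ x in a..b, deriv (fun x => G x * G x * w x) x := by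
      apply intervalIntegral.integral_congr_ae
      filter_upwards [hgi.ae_hasDerivAt_integral] with x hx hxm
      have hxm' : x ∈ Set.uIcc a b := Set.uIoc_subset_uIcc hxm
      have hdG : HasDerivAt G (g' x) x := (hx hxm' a (by simp)).const_add (g a)
      rw [Set.uIcc_of_le hab] at hxm'
      have hs := hsin x hxm'
      have hdw := ((Real.hasDerivAt_sin x).rpow_const (p := p + 1) (Or.inl hs.ne')).mul
        (Real.hasDerivAt_cos x)
      have := ((hdG.mul hdG).mul hdw).deriv
      change deriv (fun x => G x * G x * w x) x = _ at this
      rw [this]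
      simp only [hD, hGg x hxm', Pi.mul_apply]
      have e1 : Real.sin x ^ (p + 1) = Real.sin x ^ p * Real.sin x := by
        rw [Real.rpow_add hs, Real.rpow_one]
      have e2 : Real.sin x ^ (p + 2) = Real.sin x ^ p * Real.sin x ^ 2 := by
        rw [Real.rpow_add hs, Real.rpow_two]
      rw [add_sub_cancel_right, e1, e2]
      have e3 : Real.cos x ^ 2 = 1 - Real.sin x ^ 2 := by
        rw [← Real.sin_sq_add_cos_sq x]; ring
      linear_combination (-(p+1) * G x ^ 2 * Real.sin x ^ p) * e3
    rw [e, hFac.integral_deriv_eq_sub]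
    have hwb : w b ≤ 0 := mul_nonpos_of_nonneg_of_nonpos
      (Real.rpow_nonneg (hsin b ⟨hab, le_rfl⟩).le _)
      (Real.cos_nonpos_of_pi_div_two_le_of_le hb2 (by linarith))
    have hwa : 0 ≤ w a := mul_nonneg
      (Real.rpow_nonneg (hsin a ⟨le_rfl, hab⟩).le _)
      (Real.cos_nonneg_of_neg_pi_div_two_le_of_le (by linarith) ha2)
    have := mul_nonneg (mul_self_nonneg (G a)) hwa
    have := mul_nonpos_of_nonneg_of_nonpos (mul_self_nonneg (G b)) hwb
    linarith
  refine ⟨hi1, hi2, ?_⟩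
  have hmono : ∫ θ in a..b, (g θ) ^ 2 * Real.sin θ ^ p ≤
      ∫ θ in a..b, (2 * D θ + 24 * ((g' θ) ^ 2 * Real.sin θ ^ (p + 2)
        + (g θ) ^ 2 * Real.sin θ ^ (p + 2))) := by
    apply intervalIntegral.integral_mono_on hab hi1
      ((hDi.const_mul 2).add ((hI.add hi2).const_mul 24))
    intro x hx
    have hs := hsin x hx
    have e1 : Real.sin x ^ (p + 1) = Real.sin x ^ p * Real.sin x := by
      rw [Real.rpow_add hs, Real.rpow_one]
    have e2 : Real.sin x ^ (p + 2) = Real.sin x ^ p * Real.sin x ^ 2 := by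
      rw [Real.rpow_add hs, Real.rpow_two]
    simp only [hD, e1, e2]
    have hS : 0 ≤ Real.sin x ^ p := Real.rpow_nonneg hs.le _
    set S := Real.sin x ^ p
    set s := Real.sin x
    set c := Real.cos x
    have hc : c ^ 2 ≤ 1 := Real.cos_sq_le_one x
    -- S * [...] ≥ 0
    have k1 : 0 ≤ S * (g x + 2 * (g' x * s * c)) ^ 2 := by positivity
    have k2 : 0 ≤ S * ((g' x * s) ^ 2 * (1 - c ^ 2)) :=
      mul_nonneg hS (mul_nonneg (sq_nonneg _) (by linarith))
    have k3 : 0 ≤ p * (S * g x ^ 2) := by positivity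
    have k4 : 0 ≤ (10 - p) * (S * g x ^ 2 * s ^ 2) :=
      mul_nonneg (by linarith) (by positivity)
    have k5 : 0 ≤ S * (g' x * s) ^ 2 := by positivity
    nlinarith
  have hsum : ∫ θ in a..b, (2 * D θ + 24 * ((g' θ) ^ 2 * Real.sin θ ^ (p + 2)
        + (g θ) ^ 2 * Real.sin θ ^ (p + 2))) = 2 * (∫ θ in a..b, D θ) +
      24 * ((∫ θ in a..b, (g' θ) ^ 2 * Real.sin θ ^ (p + 2)) +
        ∫ θ in a..b, (g θ) ^ 2 * Real.sin θ ^ (p + 2)) := by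
    rw [intervalIntegral.integral_add (hDi.const_mul 2) ((hI.add hi2).const_mul 24),
      intervalIntegral.integral_const_mul, intervalIntegral.integral_const_mul,
      intervalIntegral.integral_add hI hi2]
  linarith

lemma hardy_conv (f : ℝ → ℝ) (a b : ℝ) (ha : 0 < a) (hab : a ≤ b) (hb : b < Real.pi)
    (q : ℝ) (hi : IntervalIntegrable (fun θ => (f θ) ^ 2 * Real.sin θ ^ q) volume a b) :
    (∫⁻ θ in Set.Ioc a b, ENNReal.ofReal ((f θ) ^ 2 * Real.sin θ ^ q)) =
      ENNReal.ofReal (∫ θ in a..b, (f θ) ^ 2 * Real.sin θ ^ q) := by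
  rw [intervalIntegral.integral_of_le hab]
  rw [ofReal_integral_eq_lintegral_ofReal]
  · exact (intervalIntegrable_iff_integrableOn_Ioc_of_le hab).1 hi
  · filter_upwards [ae_restrict_mem measurableSet_Ioc] with x hx
    exact mul_nonneg (sq_nonneg _) (Real.rpow_nonneg (Real.sin_pos_of_pos_of_lt_pi
      (ha.trans hx.1) (lt_of_le_of_lt hx.2 hb)).le _)



/-- Hardy-type inequality of Lemma A.2 (ii): for `p ∈ [0,10]` and `g ∈ H¹_loc((0,π))`,
`∫_0^π g² (sin θ)^p ≤ C ( ∫_0^π (g')² (sin θ)^{p+2} + ∫_0^π g² (sin θ)^{p+2} )`. -/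
theorem hardy_sin_pow :
    ∃ C : ℝ, 0 < C ∧
      ∀ (p : ℝ) (g g' : ℝ → ℝ), p ∈ Set.Icc (0 : ℝ) 10 →
        LocAC (Set.Ioo 0 Real.pi) g g' →
        (∫⁻ θ in Set.Ioo 0 Real.pi, ENNReal.ofReal ((g θ) ^ 2 * Real.sin θ ^ p)) ≤
          ENNReal.ofReal C *
            ((∫⁻ θ in Set.Ioo 0 Real.pi,
                ENNReal.ofReal ((g' θ) ^ 2 * Real.sin θ ^ (p + 2))) +
             (∫⁻ θ in Set.Ioo 0 Real.pi,
                ENNReal.ofReal ((g θ) ^ 2 * Real.sin θ ^ (p + 2)))) := by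
  refine ⟨24, by norm_num, ?_⟩
  intro p g g' hp h
  have hpi := Real.pi_gt_three
  by_cases htop : (∫⁻ θ in Set.Ioo 0 Real.pi,
      ENNReal.ofReal ((g' θ) ^ 2 * Real.sin θ ^ (p + 2))) = ⊤
  · rw [htop, top_add, ENNReal.mul_top (by simp)]
    exact le_top
  have hU : Set.Ioo 0 Real.pi =
      ⋃ n : ℕ, Set.Ioc (1 / ((n : ℝ) + 1)) (Real.pi - 1 / ((n : ℝ) + 1)) := by
    ext x
    simp only [Set.mem_Ioo, Set.mem_iUnion, Set.mem_Ioc]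
    constructor
    · rintro ⟨hx0, hx1⟩
      obtain ⟨n, hn⟩ := exists_nat_one_div_lt (lt_min hx0 (sub_pos.2 hx1))
      exact ⟨n, lt_of_lt_of_le hn (min_le_left _ _), by
        have := lt_of_lt_of_le hn (min_le_right _ _); linarith⟩
    · rintro ⟨n, hn1, hn2⟩
      have : (0 : ℝ) < 1 / ((n : ℝ) + 1) := Nat.one_div_pos_of_nat
      exact ⟨by linarith, by linarith⟩
  conv_lhs => rw [hU]
  rw [setLIntegral_iUnion_of_directed]
  · refine iSup_le fun n => ?_
    have hn0 : (0 : ℝ) < 1 / ((n : ℝ) + 1) := Nat.one_div_pos_of_nat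
    have hn1 : 1 / ((n : ℝ) + 1) ≤ 1 := by
      rw [div_le_one (by positivity)]
      have : (0 : ℝ) ≤ n := Nat.cast_nonneg n
      linarith
    generalize 1 / ((n : ℝ) + 1) = a at hn0 hn1
    obtain ⟨b, hb⟩ : ∃ b, b = Real.pi - a := ⟨_, rfl⟩
    rw [← hb]
    have hab : a ≤ b := by linarith
    have hbp : b < Real.pi := by linarith
    have hsub : Set.Ioc a b ⊆ Set.Ioo 0 Real.pi := fun x hx =>
      ⟨hn0.trans hx.1, lt_of_le_of_lt hx.2 hbp⟩
    have hgi := h.1 a ⟨hn0, by linarith⟩ b ⟨by linarith, hbp⟩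
    have hI : IntervalIntegrable (fun θ => (g' θ) ^ 2 * Real.sin θ ^ (p + 2)) volume a b := by
      rw [intervalIntegrable_iff_integrableOn_Ioc_of_le hab] at hgi ⊢
      have hm : AEStronglyMeasurable (fun θ => (g' θ) ^ 2 * Real.sin θ ^ (p + 2))
          (volume.restrict (Set.Ioc a b)) := by
        refine (hgi.aestronglyMeasurable.pow 2).mul ?_
        exact (Real.measurable_sin.pow_const _).aestronglyMeasurable
      refine ⟨hm, ?_⟩
      rw [hasFiniteIntegral_iff_ofReal]
      · exact lt_of_le_of_lt (lintegral_mono_set hsub) (lt_top_iff_ne_top.2 htop)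
      · filter_upwards [ae_restrict_mem measurableSet_Ioc] with x hx
        exact mul_nonneg (sq_nonneg _) (Real.rpow_nonneg (Real.sin_pos_of_pos_of_lt_pi
          (hn0.trans hx.1) (lt_of_le_of_lt hx.2 hbp)).le _)
    obtain ⟨hi1, hi2, hle⟩ := hardy_key p g g' hp h a b hn0 (by linarith) (by linarith) hbp hI
    have nn : ∀ (f : ℝ → ℝ) (q : ℝ), 0 ≤ ∫ θ in a..b, (f θ) ^ 2 * Real.sin θ ^ q := by
      intro f q
      refine intervalIntegral.integral_nonneg hab fun x hx => ?_
      exact mul_nonneg (sq_nonneg _) (Real.rpow_nonneg (Real.sin_pos_of_pos_of_lt_pi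
          (lt_of_lt_of_le hn0 hx.1) (lt_of_le_of_lt hx.2 hbp)).le _)
    calc _ = ENNReal.ofReal (∫ θ in a..b, (g θ) ^ 2 * Real.sin θ ^ p) :=
          hardy_conv g a b hn0 hab hbp p hi1
      _ ≤ _ := ENNReal.ofReal_le_ofReal hle
      _ = ENNReal.ofReal 24 * ((∫⁻ θ in Set.Ioc a b,
                ENNReal.ofReal ((g' θ) ^ 2 * Real.sin θ ^ (p + 2))) +
             (∫⁻ θ in Set.Ioc a b,
                ENNReal.ofReal ((g θ) ^ 2 * Real.sin θ ^ (p + 2)))) := by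
          rw [hardy_conv g' a b hn0 hab hbp _ hI, hardy_conv g a b hn0 hab hbp _ hi2,
            ENNReal.ofReal_mul (by norm_num), ENNReal.ofReal_add (nn _ _) (nn _ _)]
      _ ≤ _ := by
          gcongr
  · apply directed_of_isDirected_le
    intro m n hmn
    have : 1 / ((n : ℝ) + 1) ≤ 1 / ((m : ℝ) + 1) := Nat.one_div_le_one_div hmn
    exact Set.Ioc_subset_Ioc this (by linarith)
end

section
/- There is an absolute constant C ≥ 1 with the following property. Let f : (0, π) → ℝ be locally absolutely continuous with a.e. derivative f′. Then, with values in [0, +∞], C⁻¹ ( ∫_0^π |f′(θ)|² sin θ dθ + ∫_0^π |f(θ)|² (sin θ)⁻¹ dθ ) ≤ ∫_0^π |f′(θ) − (2 cos θ / sin θ) f(θ)|² sin θ dθ + ∫_0^π |f(θ)|² sin θ dθ ≤ C ( ∫_0^π |f′(θ)|² sin θ dθ + ∫_0^π |f(θ)|² (sin θ)⁻¹ dθ ). -/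
open MeasureTheory

lemma aux_ac {f f' : ℝ → ℝ} (h : LocAC (Set.Ioo 0 Real.pi) f f') {a b : ℝ}
    (ha : 0 < a) (hab : a ≤ b) (hb : b < Real.pi) :
    ∃ F : ℝ → ℝ, AbsolutelyContinuousOnInterval F a b ∧ (∀ x ∈ Set.Icc a b, F x = f x) ∧
      ∀ᵐ x, x ∈ Set.Icc a b → HasDerivAt F (f' x) x := by
  have ham : a ∈ Set.Ioo 0 Real.pi := ⟨ha, by linarith⟩
  have hbm : b ∈ Set.Ioo 0 Real.pi := ⟨by linarith, hb⟩
  have hi := h.1 a ham b hbm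
  refine ⟨fun x => f a + ∫ t in a..x, f' t, ?_, ?_, ?_⟩
  · have h1 : AbsolutelyContinuousOnInterval (fun _ : ℝ => f a) a b :=
      ContDiffOn.absolutelyContinuousOnInterval contDiffOn_const
    exact h1.add (hi.absolutelyContinuousOnInterval_intervalIntegral (c := a) (by simp))
  · intro x hx
    have := h.2 a ham x ⟨by linarith [hx.1], by linarith [hx.2]⟩
    simp only
    linarith
  · filter_upwards [hi.ae_hasDerivAt_integral] with x hx hm
    rw [Set.uIcc_of_le hab] at hx
    exact (hx hm a ⟨le_rfl, hab⟩).const_add (f a)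

lemma aux_contIcc {f f' : ℝ → ℝ} (h : LocAC (Set.Ioo 0 Real.pi) f f') {a b : ℝ}
    (ha : 0 < a) (hab : a ≤ b) (hb : b < Real.pi) : ContinuousOn f (Set.Icc a b) := by
  obtain ⟨F, hF, hFf, -⟩ := aux_ac h ha hab hb
  have := hF.continuousOn
  rw [Set.uIcc_of_le hab] at this
  exact this.congr (fun x hx => (hFf x hx).symm)

lemma aux_cont {f f' : ℝ → ℝ} (h : LocAC (Set.Ioo 0 Real.pi) f f') :
    ContinuousOn f (Set.Ioo 0 Real.pi) := by
  intro x hx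
  have hx1 := hx.1
  have hx2 := hx.2
  have := aux_contIcc h (a := x / 2) (b := (x + Real.pi) / 2) (by linarith) (by linarith)
    (by linarith)
  exact (this.continuousAt (Icc_mem_nhds (by linarith) (by linarith))).continuousWithinAt

lemma aux_integrableD {f f' : ℝ → ℝ} (h : LocAC (Set.Ioo 0 Real.pi) f f') {a b : ℝ}
    (ha : 0 < a) (hab : a ≤ b) (hb : b < Real.pi) :
    IntervalIntegrable (fun x => 2 * Real.cos x * f x * f' x - Real.sin x * f x ^ 2)
      volume a b := by
  have hc := aux_contIcc h ha hab hb
  rw [← Set.uIcc_of_le hab] at hc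
  have hi := h.1 a ⟨ha, by linarith⟩ b ⟨by linarith, hb⟩
  apply IntervalIntegrable.sub
  · exact hi.continuousOn_mul (g := fun x => 2 * Real.cos x * f x) (by fun_prop)
  · apply ContinuousOn.intervalIntegrable
    fun_prop

lemma aux_intD {f f' : ℝ → ℝ} (h : LocAC (Set.Ioo 0 Real.pi) f f') {a b : ℝ}
    (ha : 0 < a) (ha2 : a ≤ Real.pi / 2) (hb2 : Real.pi / 2 ≤ b) (hb : b < Real.pi) :
    ∫ x in a..b, (2 * Real.cos x * f x * f' x - Real.sin x * f x ^ 2) ≤ 0 := by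
  have hab : a ≤ b := ha2.trans hb2
  obtain ⟨F, hF, hFf, hFd⟩ := aux_ac h ha hab hb
  have hcos : AbsolutelyContinuousOnInterval Real.cos a b :=
    ContDiffOn.absolutelyContinuousOnInterval Real.contDiff_cos.contDiffOn
  have hm := (hcos.fun_mul (hF.fun_mul hF)).integral_deriv_eq_sub
  have he : ∫ x in a..b, (2 * Real.cos x * f x * f' x - Real.sin x * f x ^ 2) =
      ∫ x in a..b, deriv (fun x => Real.cos x * (F x * F x)) x := by
    apply intervalIntegral.integral_congr_ae
    filter_upwards [hFd] with x hx hxm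
    rw [Set.uIoc_of_le hab] at hxm
    have hxm' := Set.Ioc_subset_Icc_self hxm
    have hd := hx hxm'
    have := ((Real.hasDerivAt_cos x).fun_mul (hd.fun_mul hd)).deriv
    rw [this, hFf x hxm']
    ring
  rw [he, hm]
  have h1 : Real.cos b ≤ 0 := Real.cos_nonpos_of_pi_div_two_le_of_le hb2 (by linarith)
  have h2 : 0 ≤ Real.cos a := Real.cos_nonneg_of_mem_Icc ⟨by linarith, ha2⟩
  nlinarith [mul_self_nonneg (F a), mul_self_nonneg (F b)]

lemma aux_pt (s c x y : ℝ) (hs : 0 < s) :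
    3 * (c ^ 2 * x ^ 2 * s⁻¹) ≤ (2 * c * x * y - s * x ^ 2) +
      ((y - 2 * c / s * x) ^ 2 * s + x ^ 2 * s) := by
  obtain ⟨z, rfl⟩ : ∃ z, y = z + 2 * c / s * x := ⟨y - 2 * c / s * x, by ring⟩
  have h1 : 0 ≤ (c * x + z * s) ^ 2 * s⁻¹ := by positivity
  have h2 : (c * x + z * s) ^ 2 * s⁻¹ =
      c ^ 2 * x ^ 2 * s⁻¹ + 2 * c * x * z + z ^ 2 * s := by
    field_simp
    ring
  have h3 : 2 * c * x * (z + 2 * c / s * x) = 2 * c * x * z + 4 * (c ^ 2 * x ^ 2 * s⁻¹) := by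
    field_simp
    ring
  rw [h3]
  have h4 : z + 2 * c / s * x - 2 * c / s * x = z := by ring
  rw [h4]
  nlinarith

lemma aux_meas {f f' : ℝ → ℝ} (h : LocAC (Set.Ioo 0 Real.pi) f f') {a b : ℝ}
    (ha : 0 < a) (hab : a ≤ b) (hb : b < Real.pi) :
    AEStronglyMeasurable (fun x => (f' x - 2 * Real.cos x / Real.sin x * f x) ^ 2 * Real.sin x
      + f x ^ 2 * Real.sin x) (volume.restrict (Set.Ioc a b)) := by
  have hc : AEStronglyMeasurable f (volume.restrict (Set.Ioc a b)) :=
    ((aux_contIcc h ha hab hb).mono Set.Ioc_subset_Icc_self).aestronglyMeasurable measurableSet_Ioc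
  have hf' := (h.1 a ⟨ha, by linarith⟩ b ⟨by linarith, hb⟩).1.aestronglyMeasurable
  have h1 := hc.aemeasurable
  have h2 := hf'.aemeasurable
  apply AEMeasurable.aestronglyMeasurable
  fun_prop

lemma aux_piece {f f' : ℝ → ℝ} (h : LocAC (Set.Ioo 0 Real.pi) f f') {a b : ℝ}
    (ha : 0 < a) (ha2 : a ≤ Real.pi / 2) (hb2 : Real.pi / 2 ≤ b) (hb : b < Real.pi) :
    ∫⁻ x in Set.Ioc a b, ENNReal.ofReal (3 * (Real.cos x ^ 2 * f x ^ 2 * (Real.sin x)⁻¹)) ≤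
      ∫⁻ x in Set.Ioc a b, ENNReal.ofReal
        ((f' x - 2 * Real.cos x / Real.sin x * f x) ^ 2 * Real.sin x + f x ^ 2 * Real.sin x) := by
  have hab : a ≤ b := ha2.trans hb2
  by_cases htop : ∫⁻ x in Set.Ioc a b, ENNReal.ofReal
        ((f' x - 2 * Real.cos x / Real.sin x * f x) ^ 2 * Real.sin x + f x ^ 2 * Real.sin x) = ⊤
  · rw [htop]; exact le_top
  have hsin : ∀ x ∈ Set.Icc a b, 0 < Real.sin x := fun x hx =>
    Real.sin_pos_of_pos_of_lt_pi (by linarith [hx.1]) (by linarith [hx.2])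
  have hw0 : 0 ≤ᵐ[volume.restrict (Set.Ioc a b)] fun x =>
      (f' x - 2 * Real.cos x / Real.sin x * f x) ^ 2 * Real.sin x + f x ^ 2 * Real.sin x := by
    filter_upwards [ae_restrict_mem measurableSet_Ioc] with x hx
    have := hsin x (Set.Ioc_subset_Icc_self hx)
    simp only [Pi.zero_apply]
    positivity
  have hu0 : 0 ≤ᵐ[volume.restrict (Set.Ioc a b)] fun x =>
      3 * (Real.cos x ^ 2 * f x ^ 2 * (Real.sin x)⁻¹) := by
    filter_upwards [ae_restrict_mem measurableSet_Ioc] with x hx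
    have := hsin x (Set.Ioc_subset_Icc_self hx)
    simp only [Pi.zero_apply]
    positivity
  have hw : IntegrableOn (fun x =>
      (f' x - 2 * Real.cos x / Real.sin x * f x) ^ 2 * Real.sin x + f x ^ 2 * Real.sin x)
      (Set.Ioc a b) := by
    refine ⟨aux_meas h ha hab hb, ?_⟩
    rw [hasFiniteIntegral_iff_ofReal hw0]
    exact lt_top_iff_ne_top.2 htop
  have hu : IntegrableOn (fun x => 3 * (Real.cos x ^ 2 * f x ^ 2 * (Real.sin x)⁻¹))
      (Set.Ioc a b) := by
    have hc := aux_contIcc h ha hab hb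
    have : ContinuousOn (fun x => 3 * (Real.cos x ^ 2 * f x ^ 2 * (Real.sin x)⁻¹))
        (Set.Icc a b) := by
      have : ContinuousOn (fun x => (Real.sin x)⁻¹) (Set.Icc a b) :=
        Real.continuous_sin.continuousOn.inv₀ (fun x hx => (hsin x hx).ne')
      fun_prop
    exact (this.integrableOn_Icc).mono_set Set.Ioc_subset_Icc_self
  rw [← ofReal_integral_eq_lintegral_ofReal hw hw0, ← ofReal_integral_eq_lintegral_ofReal hu hu0]
  apply ENNReal.ofReal_le_ofReal
  have hD := (aux_integrableD h ha hab hb).1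
  have hDi := aux_intD h ha ha2 hb2 hb
  rw [intervalIntegral.integral_of_le hab] at hDi
  have hle := setIntegral_mono_on hu (hD.add hw) measurableSet_Ioc (fun x hx =>
    aux_pt (Real.sin x) (Real.cos x) (f x) (f' x) (hsin x (Set.Ioc_subset_Icc_self hx)))
  have hadd := integral_add hD hw
  simp only [Pi.add_apply] at hle
  linarith

lemma aux_main {f f' : ℝ → ℝ} (h : LocAC (Set.Ioo 0 Real.pi) f f') :
    ∫⁻ x in Set.Ioo 0 Real.pi, ENNReal.ofReal (3 * (Real.cos x ^ 2 * f x ^ 2 * (Real.sin x)⁻¹)) ≤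
      ∫⁻ x in Set.Ioo 0 Real.pi, ENNReal.ofReal
        ((f' x - 2 * Real.cos x / Real.sin x * f x) ^ 2 * Real.sin x + f x ^ 2 * Real.sin x) := by
  have hpi := Real.pi_pos
  let e : ℕ → ℝ := fun n => Real.pi / 2 * (1 / ((n : ℝ) + 1))
  have he0 : ∀ n, 0 < e n := fun n => by positivity
  have hanti : Antitone e := fun m n hmn =>
    mul_le_mul_of_nonneg_left (Nat.one_div_le_one_div hmn) (by positivity)
  have he1 : ∀ n, e n ≤ Real.pi / 2 := fun n => by
    have := hanti (Nat.zero_le n)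
    simpa [e] using this
  have hU : Set.Ioo 0 Real.pi = ⋃ n, Set.Ioc (e n) (Real.pi - e n) := by
    ext x
    simp only [Set.mem_Ioo, Set.mem_iUnion, Set.mem_Ioc]
    constructor
    · rintro ⟨h0, h1⟩
      have ht : Filter.Tendsto e Filter.atTop (nhds (Real.pi / 2 * 0)) :=
        tendsto_one_div_add_atTop_nhds_zero_nat.const_mul _
      rw [mul_zero] at ht
      obtain ⟨n, hn⟩ := (ht.eventually_lt_const (lt_min h0 (sub_pos.2 h1))).exists
      have := lt_min_iff.1 hn
      exact ⟨n, this.1, by linarith⟩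
    · rintro ⟨n, h1, h2⟩
      have := he0 n
      exact ⟨by linarith, by linarith⟩
  have hdir : Directed (· ⊆ ·) (fun n => Set.Ioc (e n) (Real.pi - e n)) := by
    apply Monotone.directed_le (α := ℕ) (β := Set ℝ)
    intro m n hmn
    have := hanti hmn
    exact Set.Ioc_subset_Ioc this (by linarith)
  conv_lhs => rw [hU, setLIntegral_iUnion_of_directed _ hdir]
  refine iSup_le fun n => ?_
  have := he0 n
  have := he1 n
  refine (aux_piece h (he0 n) (he1 n) (by linarith) (by linarith)).trans ?_
  apply lintegral_mono_set
  rw [hU]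
  exact Set.subset_iUnion (fun n => Set.Ioc (e n) (Real.pi - e n)) n

/-- Two-sided Hardy-type comparison of Lemma A.2 (iii):
`∫ (f')² sin θ + ∫ f² (sin θ)⁻¹ ≈ ∫ (f' − (2cos θ/sin θ) f)² sin θ + ∫ f² sin θ`. -/
theorem hardy_twisted_comparison :
    ∃ C : ℝ, 1 ≤ C ∧
      ∀ f f' : ℝ → ℝ, LocAC (Set.Ioo 0 Real.pi) f f' →
        (ENNReal.ofReal C)⁻¹ *
            ((∫⁻ θ in Set.Ioo 0 Real.pi, ENNReal.ofReal ((f' θ) ^ 2 * Real.sin θ)) +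
             (∫⁻ θ in Set.Ioo 0 Real.pi, ENNReal.ofReal ((f θ) ^ 2 * (Real.sin θ)⁻¹))) ≤
          (∫⁻ θ in Set.Ioo 0 Real.pi,
              ENNReal.ofReal ((f' θ - 2 * Real.cos θ / Real.sin θ * f θ) ^ 2 * Real.sin θ)) +
          (∫⁻ θ in Set.Ioo 0 Real.pi, ENNReal.ofReal ((f θ) ^ 2 * Real.sin θ)) ∧
        (∫⁻ θ in Set.Ioo 0 Real.pi,
            ENNReal.ofReal ((f' θ - 2 * Real.cos θ / Real.sin θ * f θ) ^ 2 * Real.sin θ)) +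
          (∫⁻ θ in Set.Ioo 0 Real.pi, ENNReal.ofReal ((f θ) ^ 2 * Real.sin θ)) ≤
          ENNReal.ofReal C *
            ((∫⁻ θ in Set.Ioo 0 Real.pi, ENNReal.ofReal ((f' θ) ^ 2 * Real.sin θ)) +
             (∫⁻ θ in Set.Ioo 0 Real.pi, ENNReal.ofReal ((f θ) ^ 2 * (Real.sin θ)⁻¹))) := by
  refine ⟨10, by norm_num, fun f f' h => ?_⟩
  have hsin : ∀ x ∈ Set.Ioo 0 Real.pi, 0 < Real.sin x := fun x hx =>
    Real.sin_pos_of_pos_of_lt_pi hx.1 hx.2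
  have hfm : AEMeasurable f (volume.restrict (Set.Ioo 0 Real.pi)) :=
    (aux_cont h).aemeasurable measurableSet_Ioo
  have hm1 : AEMeasurable (fun x => ENNReal.ofReal (f x ^ 2 * Real.sin x))
      (volume.restrict (Set.Ioo 0 Real.pi)) := by fun_prop
  have hm2 : AEMeasurable (fun x => ENNReal.ofReal (f x ^ 2 * (Real.sin x)⁻¹))
      (volume.restrict (Set.Ioo 0 Real.pi)) := by fun_prop
  have hm3 : AEMeasurable (fun x => ENNReal.ofReal
      (3 * (Real.cos x ^ 2 * f x ^ 2 * (Real.sin x)⁻¹)))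
      (volume.restrict (Set.Ioo 0 Real.pi)) := by fun_prop
  rw [← lintegral_add_right' _ hm1, ← lintegral_add_right' _ hm2]
  have h10 : ENNReal.ofReal 10 ≠ ⊤ := ENNReal.ofReal_ne_top
  have h10' : ENNReal.ofReal 10 ≠ 0 := by simp
  have hW : ∫⁻ x in Set.Ioo 0 Real.pi, ENNReal.ofReal
        ((f' x - 2 * Real.cos x / Real.sin x * f x) ^ 2 * Real.sin x + f x ^ 2 * Real.sin x) =
      ∫⁻ x in Set.Ioo 0 Real.pi, (ENNReal.ofReal
        ((f' x - 2 * Real.cos x / Real.sin x * f x) ^ 2 * Real.sin x) +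
          ENNReal.ofReal (f x ^ 2 * Real.sin x)) := by
    apply setLIntegral_congr_fun measurableSet_Ioo
    intro x hx
    have := hsin x hx
    exact ENNReal.ofReal_add (by positivity) (by positivity)
  constructor
  · rw [ENNReal.inv_mul_le_iff h10' h10]
    have hmain := aux_main h
    rw [hW] at hmain
    calc _ ≤ ∫⁻ x in Set.Ioo 0 Real.pi, (ENNReal.ofReal 2 * (ENNReal.ofReal
        ((f' x - 2 * Real.cos x / Real.sin x * f x) ^ 2 * Real.sin x) +
          ENNReal.ofReal (f x ^ 2 * Real.sin x)) + ENNReal.ofReal 3 *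
          ENNReal.ofReal (3 * (Real.cos x ^ 2 * f x ^ 2 * (Real.sin x)⁻¹))) := by
          apply setLIntegral_mono' measurableSet_Ioo
          intro x hx
          have hs := hsin x hx
          rw [← ENNReal.ofReal_add (by positivity) (by positivity),
            ← ENNReal.ofReal_add (by positivity) (by positivity),
            ← ENNReal.ofReal_mul (by positivity), ← ENNReal.ofReal_mul (by positivity),
            ← ENNReal.ofReal_add (by positivity) (by positivity)]
          apply ENNReal.ofReal_le_ofReal
          obtain ⟨z, hz⟩ : ∃ z, f' x = z + 2 * Real.cos x / Real.sin x * f x :=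
            ⟨f' x - 2 * Real.cos x / Real.sin x * f x, by ring⟩
          have e1 : f' x - 2 * Real.cos x / Real.sin x * f x = z := by rw [hz]; ring
          have e2 : f x ^ 2 * (Real.sin x)⁻¹ =
              Real.cos x ^ 2 * f x ^ 2 * (Real.sin x)⁻¹ + f x ^ 2 * Real.sin x := by
            have := Real.sin_sq_add_cos_sq x
            field_simp
            linear_combination (- f x ^ 2) * this
          have e3 : (2 * Real.cos x / Real.sin x * f x) ^ 2 * Real.sin x =
              4 * (Real.cos x ^ 2 * f x ^ 2 * (Real.sin x)⁻¹) := by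
            field_simp
            ring
          rw [e1, e2, hz]
          have e4 : 0 ≤ (z - 2 * Real.cos x / Real.sin x * f x) ^ 2 * Real.sin x := by positivity
          have e5 : 0 ≤ f x ^ 2 * Real.sin x := by positivity
          nlinarith
      _ = ENNReal.ofReal 2 * (∫⁻ x in Set.Ioo 0 Real.pi, (ENNReal.ofReal
        ((f' x - 2 * Real.cos x / Real.sin x * f x) ^ 2 * Real.sin x) +
          ENNReal.ofReal (f x ^ 2 * Real.sin x))) + ENNReal.ofReal 3 *
          ∫⁻ x in Set.Ioo 0 Real.pi,
            ENNReal.ofReal (3 * (Real.cos x ^ 2 * f x ^ 2 * (Real.sin x)⁻¹)) := by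
          rw [lintegral_add_right' _ (hm3.const_mul _),
            lintegral_const_mul' _ _ ENNReal.ofReal_ne_top,
            lintegral_const_mul' _ _ ENNReal.ofReal_ne_top]
      _ ≤ ENNReal.ofReal 2 * (∫⁻ x in Set.Ioo 0 Real.pi, (ENNReal.ofReal
        ((f' x - 2 * Real.cos x / Real.sin x * f x) ^ 2 * Real.sin x) +
          ENNReal.ofReal (f x ^ 2 * Real.sin x))) + ENNReal.ofReal 3 * _ :=
          add_le_add le_rfl (mul_le_mul_right hmain _)
      _ ≤ _ := by
          rw [← add_mul, ← ENNReal.ofReal_add (by norm_num) (by norm_num)]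
          gcongr
          norm_num
  · rw [← lintegral_const_mul' _ _ h10]
    apply setLIntegral_mono' measurableSet_Ioo
    intro x hx
    have hs := hsin x hx
    rw [← ENNReal.ofReal_add (by positivity) (by positivity),
      ← ENNReal.ofReal_add (by positivity) (by positivity),
      ← ENNReal.ofReal_mul (by positivity)]
    apply ENNReal.ofReal_le_ofReal
    have e2 : f x ^ 2 * (Real.sin x)⁻¹ =
        Real.cos x ^ 2 * f x ^ 2 * (Real.sin x)⁻¹ + f x ^ 2 * Real.sin x := by
      have := Real.sin_sq_add_cos_sq x
      field_simp
      linear_combination (- f x ^ 2) * this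
    have e3 : (2 * Real.cos x / Real.sin x * f x) ^ 2 * Real.sin x =
        4 * (Real.cos x ^ 2 * f x ^ 2 * (Real.sin x)⁻¹) := by
      field_simp
      ring
    have e4 : 0 ≤ (f' x + 2 * Real.cos x / Real.sin x * f x) ^ 2 * Real.sin x := by positivity
    have e5 : 0 ≤ f x ^ 2 * Real.sin x := by positivity
    have e6 : 0 ≤ f' x ^ 2 * Real.sin x := by positivity
    have e7 : 0 ≤ Real.cos x ^ 2 * f x ^ 2 * (Real.sin x)⁻¹ := by positivity
    rw [e2]
    nlinarith
end

section
/- There is an absolute constant C > 0 with the following property. Let g : (0, π) → ℝ be locally absolutely continuous with a.e. derivative g′. Then ∫_0^π |g(θ)|² (sin θ)⁻¹ dθ ≤ C ( ∫_0^π |g′(θ) + (cos θ / sin θ) g(θ)|² sin θ dθ + ∫_0^π |g(θ)|² sin θ dθ ), where all integrals are allowed to be +∞. -/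
open MeasureTheory

open MeasureTheory Set Filter Topology

lemma LocAC.mul_aux {l r : ℝ} {f f' g g' : ℝ → ℝ} (hf : LocAC (Ioo l r) f f')
    (hg : LocAC (Ioo l r) g g') :
    LocAC (Ioo l r) (fun x => f x * g x) (fun x => f' x * g x + f x * g' x) := by
  have key : ∀ a ∈ Ioo l r, ∀ b ∈ Ioo l r,
      IntervalIntegrable (fun x => f' x * g x + f x * g' x) volume a b ∧
      f b * g b - f a * g a = ∫ t in a..b, (f' t * g t + f t * g' t) := by
    intro a ha b hb
    have hsub : uIcc a b ⊆ Ioo l r := ordConnected_Ioo.uIcc_subset ha hb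
    have rep : ∀ (k k' : ℝ → ℝ), LocAC (Ioo l r) k k' → 
        ∃ K : ℝ → ℝ, AbsolutelyContinuousOnInterval K a b ∧ (∀ x ∈ uIcc a b, K x = k x) ∧
          (∀ᵐ x, x ∈ uIcc a b → deriv K x = k' x) := by
      intro k k' hk
      refine ⟨fun x => k a + ∫ t in a..x, k' t, ?_, ?_, ?_⟩
      · have h1 : AbsolutelyContinuousOnInterval (fun _ : ℝ => k a) a b :=
          ContDiffOn.absolutelyContinuousOnInterval contDiffOn_const
        exact h1.add ((hk.1 a ha b hb).absolutelyContinuousOnInterval_intervalIntegral left_mem_uIcc)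
      · intro x hx
        have := hk.2 a ha x (hsub hx)
        simp only
        linarith
      · filter_upwards [(hk.1 a ha b hb).ae_hasDerivAt_integral] with x hx hxm
        exact ((hx hxm a left_mem_uIcc).const_add (k a)).deriv
    obtain ⟨F, hF, hFe, hFd⟩ := rep f f' hf
    obtain ⟨G, hG, hGe, hGd⟩ := rep g g' hg
    have hfc : ContinuousOn f (uIcc a b) := hF.continuousOn.congr fun x hx => (hFe x hx).symm
    have hgc : ContinuousOn g (uIcc a b) := hG.continuousOn.congr fun x hx => (hGe x hx).symm
    refine ⟨((hf.1 a ha b hb).mul_continuousOn hgc).add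
      ((hg.1 a ha b hb).continuousOn_mul hfc), ?_⟩
    rw [← hFe a left_mem_uIcc, ← hFe b right_mem_uIcc, ← hGe a left_mem_uIcc,
      ← hGe b right_mem_uIcc, ← hF.integral_deriv_mul_eq_sub hG]
    apply intervalIntegral.integral_congr_ae
    filter_upwards [hFd, hGd] with x h1 h2 hx
    have hx' := uIoc_subset_uIcc hx
    rw [h1 hx', h2 hx', hFe x hx', hGe x hx']
  exact ⟨fun a ha b hb => (key a ha b hb).1, fun a ha b hb => (key a ha b hb).2⟩

lemma LocAC.continuousOn_aux {l r : ℝ} {f f' : ℝ → ℝ} (hf : LocAC (Ioo l r) f f') :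
    ContinuousOn f (Ioo l r) := by
  intro x hx
  obtain ⟨a, ha, hax⟩ := exists_between hx.1
  obtain ⟨b, hxb, hb⟩ := exists_between hx.2
  have haI : a ∈ Ioo l r := ⟨ha, hax.trans hx.2⟩
  have hbI : b ∈ Ioo l r := ⟨hx.1.trans hxb, hb⟩
  have h1 : ContinuousOn (fun x => f a + ∫ t in a..x, f' t) (uIcc a b) :=
    continuousOn_const.add
      ((hf.1 a haI b hbI).absolutelyContinuousOnInterval_intervalIntegral
        left_mem_uIcc).continuousOn
  rw [uIcc_of_le (hax.trans hxb).le] at h1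
  have h2 : ContinuousOn f (Icc a b) := h1.congr fun y hy => by
    have := hf.2 a haI y ⟨ha.trans_le hy.1, hy.2.trans_lt hb⟩
    simp only
    linarith
  exact (h2.continuousAt (Icc_mem_nhds hax hxb)).continuousWithinAt

lemma locAC_of_hasDerivAt {l r : ℝ} {f f' : ℝ → ℝ} (h : ∀ x, HasDerivAt f (f' x) x)
    (hc : Continuous f') : LocAC (Ioo l r) f f' :=
  ⟨fun a _ b _ => hc.intervalIntegrable a b, fun a _ b _ =>
    (intervalIntegral.integral_eq_sub_of_hasDerivAt (fun x _ => h x)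
      (hc.intervalIntegrable a b)).symm⟩

lemma LocAC.aesm_aux {l r : ℝ} {f f' : ℝ → ℝ} (hf : LocAC (Ioo l r) f f') :
    AEStronglyMeasurable f' (volume.restrict (Ioo l r)) := by
  have : LocallyIntegrableOn f' (Ioo l r) := by
    intro x hx
    obtain ⟨a, ha, hax⟩ := exists_between hx.1
    obtain ⟨b, hxb, hb⟩ := exists_between hx.2
    have haI : a ∈ Ioo l r := ⟨ha, hax.trans hx.2⟩
    have hbI : b ∈ Ioo l r := ⟨hx.1.trans hxb, hb⟩
    have h := hf.1 a haI b hbI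
    rw [intervalIntegrable_iff_integrableOn_Icc_of_le (hax.trans hxb).le] at h
    exact ⟨Icc a b, mem_nhdsWithin_of_mem_nhds (Icc_mem_nhds hax hxb), h⟩
  exact this.aestronglyMeasurable

lemma small_aux {g : ℝ → ℝ} (hI : IntegrableOn (fun θ => (g θ) ^ 2 * Real.sin θ) (Ioo 0 Real.pi))
    {p q c ε : ℝ} (hp : 0 ≤ p) (hq : q ≤ Real.pi) (hpq : p < q) (hc : c ∈ Icc p q) (hε : 0 < ε)
    (hs : ∀ x ∈ Ioo p q, Real.sin x ≤ |x - c|) :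
    ∃ x ∈ Ioo p q, (g x * Real.sin x) ^ 2 < ε := by
  by_contra! H
  have hsub : Ioo p q ⊆ Ioo 0 Real.pi := Ioo_subset_Ioo hp hq
  have h1 : IntervalIntegrable (fun x => (x - c)⁻¹) volume p q := by
    rw [intervalIntegrable_iff_integrableOn_Ioo_of_le hpq.le]
    refine ((hI.mono_set hsub).const_mul ε⁻¹).mono'
      (by fun_prop) ?_
    refine (ae_restrict_iff' measurableSet_Ioo).2 (Eventually.of_forall fun x hx => ?_)
    have hsx : 0 < Real.sin x := Real.sin_pos_of_mem_Ioo (hsub hx)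
    have h2 := H x hx
    rw [norm_inv, Real.norm_eq_abs]
    calc |x - c|⁻¹ ≤ (Real.sin x)⁻¹ := inv_anti₀ hsx (hs x hx)
      _ = ε⁻¹ * (ε * (Real.sin x)⁻¹) := by field_simp
      _ ≤ ε⁻¹ * ((g x * Real.sin x) ^ 2 * (Real.sin x)⁻¹) := by gcongr
      _ = ε⁻¹ * ((g x) ^ 2 * Real.sin x) := by field_simp
  rw [intervalIntegrable_sub_inv_iff, uIcc_of_le hpq.le] at h1
  rcases h1 with h1 | h1
  · exact hpq.ne h1
  · exact h1 hc

theorem hardy_real {g g' : ℝ → ℝ} (hg : LocAC (Ioo 0 Real.pi) g g')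
    (hH : IntegrableOn (fun θ => (g' θ + Real.cos θ / Real.sin θ * g θ) ^ 2 * Real.sin θ)
      (Ioo 0 Real.pi))
    (hI : IntegrableOn (fun θ => (g θ) ^ 2 * Real.sin θ) (Ioo 0 Real.pi))
    {a b : ℝ} (ha : 0 < a) (ha2 : a < Real.pi / 2) (hb2 : Real.pi / 2 < b) (hb : b < Real.pi) :
    ∫ θ in a..b, (g θ) ^ 2 * (Real.sin θ)⁻¹ ≤
      5 * ∫ θ in Ioo 0 Real.pi, (g' θ + Real.cos θ / Real.sin θ * g θ) ^ 2 * Real.sin θ := by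
  set h : ℝ → ℝ := fun θ => g' θ + Real.cos θ / Real.sin θ * g θ with hh
  set H : ℝ := ∫ θ in Ioo 0 Real.pi, h θ ^ 2 * Real.sin θ with hHdef
  have hpos : ∀ x ∈ Ioo 0 Real.pi, 0 < Real.sin x := fun x hx => Real.sin_pos_of_mem_Ioo hx
  have hu := hg.mul_aux (locAC_of_hasDerivAt Real.hasDerivAt_sin Real.continuous_cos)
  have hv := (hg.mul_aux hg).mul_aux
    (locAC_of_hasDerivAt Real.hasDerivAt_cos Real.continuous_sin.neg)
  have hII : ∀ x ∈ Ioo 0 Real.pi, ∀ y ∈ Ioo 0 Real.pi, x ≤ y →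
      IntervalIntegrable (fun θ => h θ ^ 2 * Real.sin θ) volume x y ∧
      ∫ θ in x..y, h θ ^ 2 * Real.sin θ ≤ H := by
    intro x hx y hy hxy
    have hsub : Ioo x y ⊆ Ioo 0 Real.pi := Ioo_subset_Ioo hx.1.le hy.2.le
    constructor
    · rw [intervalIntegrable_iff_integrableOn_Ioo_of_le hxy]
      exact IntegrableOn.mono_set hH hsub
    · rw [intervalIntegral.integral_of_le hxy, integral_Ioc_eq_integral_Ioo]
      refine setIntegral_mono_set hH ?_ hsub.eventuallyLE
      exact (ae_restrict_iff' measurableSet_Ioo).2 (Eventually.of_forall fun t ht =>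
        mul_nonneg (sq_nonneg _) (hpos t ht).le)
  have hH0 : 0 ≤ H := setIntegral_nonneg measurableSet_Ioo
    fun t ht => mul_nonneg (sq_nonneg _) (hpos t ht).le
  -- Cauchy-Schwarz
  have hCS : ∀ x ∈ Ioo 0 Real.pi, ∀ y ∈ Ioo 0 Real.pi, x ≤ y →
      (g y * Real.sin y - g x * Real.sin x) ^ 2 ≤ H * (Real.cos x - Real.cos y) := by
    intro x hx y hy hxy
    have hsubI : ∀ t ∈ Icc x y, t ∈ Ioo 0 Real.pi :=
      fun t ht => ⟨hx.1.trans_le ht.1, ht.2.trans_lt hy.2⟩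
    have hquad : ∀ t : ℝ, 0 ≤ (Real.cos x - Real.cos y) * (t * t) +
        (-2 * (g y * Real.sin y - g x * Real.sin x)) * t + H := by
      intro t
      have e1 := hu.2 x hx y hy
      have i1 := hu.1 x hx y hy
      have i2 := (hII x hx y hy hxy).1
      have i3 : IntervalIntegrable (fun θ => t ^ 2 * Real.sin θ) volume x y :=
        (by fun_prop : Continuous fun θ => t ^ 2 * Real.sin θ).intervalIntegrable _ _
      have m := intervalIntegral.integral_mono_on hxy (i1.const_mul (2 * t)) (i2.add i3)
        (fun θ hθ => by
          have hs := hpos θ (hsubI θ hθ)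
          have : g' θ * Real.sin θ + g θ * Real.cos θ = h θ * Real.sin θ := by
            simp only [hh]; field_simp
          rw [this]
          nlinarith [mul_nonneg (sq_nonneg (h θ - t)) hs.le])
      rw [intervalIntegral.integral_const_mul, ← e1, intervalIntegral.integral_add i2 i3,
        intervalIntegral.integral_const_mul, integral_sin] at m
      have := (hII x hx y hy hxy).2
      nlinarith
    have := discrim_le_zero hquad
    rw [discrim] at this
    nlinarith
  have aI : a ∈ Ioo 0 Real.pi := ⟨ha, by linarith⟩
  have bI : b ∈ Ioo 0 Real.pi := ⟨by linarith, hb⟩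
  have hab : a ≤ b := by linarith
  have bound : ∀ x ∈ Ioo 0 Real.pi, (∀ ε > 0, ∃ y ∈ Ioo 0 Real.pi, (g y * Real.sin y) ^ 2 < ε ∧
      (g x * Real.sin x - g y * Real.sin y) ^ 2 ≤ H * Real.sin x ^ 2) → g x ^ 2 ≤ 2 * H := by
    intro x hx hy
    have hs := hpos x hx
    have : (g x * Real.sin x) ^ 2 ≤ 2 * (H * Real.sin x ^ 2) := by
      refine le_of_forall_pos_le_add fun ε hε => ?_
      obtain ⟨y, -, h1, h2⟩ := hy (ε / 2) (by positivity)
      nlinarith [sq_nonneg (g x * Real.sin x - 2 * (g y * Real.sin y))]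
    have h3 : 0 < Real.sin x ^ 2 := by positivity
    rw [mul_pow] at this
    nlinarith
  have hga : g a ^ 2 ≤ 2 * H := by
    refine bound a aI fun ε hε => ?_
    obtain ⟨y, hy, hy2⟩ := small_aux (c := 0) hI le_rfl aI.2.le ha ⟨le_rfl, ha.le⟩ hε
      (fun x hx => by rw [sub_zero, abs_of_pos hx.1]; exact (Real.sin_lt hx.1).le)
    have hyI : y ∈ Ioo 0 Real.pi := ⟨hy.1, hy.2.trans aI.2⟩
    refine ⟨y, hyI, hy2, (hCS y hyI a aI hy.2.le).trans ?_⟩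
    gcongr
    have hc : 0 ≤ Real.cos a := Real.cos_nonneg_of_mem_Icc ⟨by linarith, by linarith⟩
    nlinarith [Real.sin_sq_add_cos_sq a, Real.cos_le_one a, Real.cos_le_one y]
  have hgb : g b ^ 2 ≤ 2 * H := by
    refine bound b bI fun ε hε => ?_
    obtain ⟨y, hy, hy2⟩ := small_aux (c := Real.pi) hI bI.1.le le_rfl hb ⟨hb.le, le_rfl⟩ hε
      (fun x hx => by
        rw [abs_sub_comm, abs_of_pos (sub_pos.2 hx.2), ← Real.sin_pi_sub]
        exact (Real.sin_lt (sub_pos.2 hx.2)).le)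
    have hyI : y ∈ Ioo 0 Real.pi := ⟨bI.1.trans hy.1, hy.2⟩
    refine ⟨y, hyI, hy2, ?_⟩
    rw [← neg_sub, neg_sq]
    refine (hCS b bI y hyI hy.1.le).trans ?_
    gcongr
    have hc : Real.cos b ≤ 0 := Real.cos_nonpos_of_pi_div_two_le_of_le (by linarith) (by linarith)
    nlinarith [Real.sin_sq_add_cos_sq b, Real.neg_one_le_cos b, Real.neg_one_le_cos y]
  have hsubI : ∀ t ∈ Icc a b, t ∈ Ioo 0 Real.pi :=
    fun t ht => ⟨ha.trans_le ht.1, ht.2.trans_lt hb⟩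
  have j1 : IntervalIntegrable (fun θ => (g θ) ^ 2 * (Real.sin θ)⁻¹) volume a b := by
    apply ContinuousOn.intervalIntegrable
    rw [uIcc_of_le hab]
    exact ((hg.continuousOn_aux.mono hsubI).pow 2).mul
      (Real.continuous_sin.continuousOn.inv₀ fun t ht => (hpos t (hsubI t ht)).ne')
  have j2 := (hII a aI b bI hab)
  have j3 := hv.1 a aI b bI
  have m := intervalIntegral.integral_mono_on hab j1 (j2.1.sub j3) (fun θ hθ => by
    have hs := hpos θ (hsubI θ hθ)
    have e : g' θ = h θ - Real.cos θ / Real.sin θ * g θ := by simp only [hh]; ring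
    have e1 : (Real.sin θ)⁻¹ = (Real.cos θ) ^ 2 / Real.sin θ + Real.sin θ := by
      field_simp
      linarith [Real.sin_sq_add_cos_sq θ]
    have e2 : 0 ≤ (h θ * Real.sin θ - g θ * Real.cos θ) ^ 2 / Real.sin θ := by positivity
    rw [e, e1, ← sub_nonneg]
    convert e2 using 1
    field_simp
    ring)
  rw [intervalIntegral.integral_sub j2.1 j3, ← hv.2 a aI b bI] at m
  nlinarith [Real.cos_le_one a, Real.neg_one_le_cos b, sq_nonneg (g a), sq_nonneg (g b), j2.2]

/-- Hardy-type inequality of Lemma A.2 (iv):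
`∫ g² (sin θ)⁻¹ ≤ C ( ∫ (g' + (cos θ/sin θ) g)² sin θ + ∫ g² sin θ )`. -/
theorem hardy_inverse_sin :
    ∃ C : ℝ, 0 < C ∧
      ∀ g g' : ℝ → ℝ, LocAC (Set.Ioo 0 Real.pi) g g' →
        (∫⁻ θ in Set.Ioo 0 Real.pi, ENNReal.ofReal ((g θ) ^ 2 * (Real.sin θ)⁻¹)) ≤
          ENNReal.ofReal C *
            ((∫⁻ θ in Set.Ioo 0 Real.pi,
                ENNReal.ofReal ((g' θ + Real.cos θ / Real.sin θ * g θ) ^ 2 * Real.sin θ)) +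
             (∫⁻ θ in Set.Ioo 0 Real.pi, ENNReal.ofReal ((g θ) ^ 2 * Real.sin θ))) := by
  refine ⟨5, by norm_num, fun g g' hg => ?_⟩
  set A := ∫⁻ θ in Set.Ioo 0 Real.pi,
    ENNReal.ofReal ((g' θ + Real.cos θ / Real.sin θ * g θ) ^ 2 * Real.sin θ) with hA
  set B := ∫⁻ θ in Set.Ioo 0 Real.pi, ENNReal.ofReal ((g θ) ^ 2 * Real.sin θ) with hB
  have h5 : ENNReal.ofReal 5 ≠ 0 := by simp
  by_cases hAt : A = ⊤
  · simp [hAt, ENNReal.mul_top h5]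
  by_cases hBt : B = ⊤
  · simp [hBt, ENNReal.mul_top h5]
  have hpos : ∀ x ∈ Ioo 0 Real.pi, 0 < Real.sin x := fun x hx => Real.sin_pos_of_mem_Ioo hx
  have hsinv : ContinuousOn (fun θ => (Real.sin θ)⁻¹) (Ioo 0 Real.pi) :=
    Real.continuous_sin.continuousOn.inv₀ fun t ht => (hpos t ht).ne'
  have hgc := hg.continuousOn_aux
  have mg : AEStronglyMeasurable g (volume.restrict (Ioo 0 Real.pi)) :=
    hgc.aestronglyMeasurable measurableSet_Ioo
  have ms : AEStronglyMeasurable Real.sin (volume.restrict (Ioo 0 Real.pi)) :=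
    Real.continuous_sin.aestronglyMeasurable
  have mH : AEStronglyMeasurable
      (fun θ => (g' θ + Real.cos θ / Real.sin θ * g θ) ^ 2 * Real.sin θ)
      (volume.restrict (Ioo 0 Real.pi)) := by
    refine ((hg.aesm_aux.add (AEStronglyMeasurable.mul ?_ mg)).pow 2).mul ms
    simp only [div_eq_mul_inv]
    exact Real.continuous_cos.aestronglyMeasurable.mul
      (hsinv.aestronglyMeasurable measurableSet_Ioo)
  have nnH : 0 ≤ᵐ[volume.restrict (Ioo 0 Real.pi)]
      (fun θ => (g' θ + Real.cos θ / Real.sin θ * g θ) ^ 2 * Real.sin θ) :=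
    (ae_restrict_iff' measurableSet_Ioo).2 (Eventually.of_forall fun t ht =>
        mul_nonneg (sq_nonneg _) (hpos t ht).le)
  have nnI : 0 ≤ᵐ[volume.restrict (Ioo 0 Real.pi)] (fun θ => (g θ) ^ 2 * Real.sin θ) :=
    (ae_restrict_iff' measurableSet_Ioo).2 (Eventually.of_forall fun t ht =>
        mul_nonneg (sq_nonneg _) (hpos t ht).le)
  have hH : IntegrableOn (fun θ => (g' θ + Real.cos θ / Real.sin θ * g θ) ^ 2 * Real.sin θ)
      (Ioo 0 Real.pi) := (lintegral_ofReal_ne_top_iff_integrable mH nnH).1 hAt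
  have hI : IntegrableOn (fun θ => (g θ) ^ 2 * Real.sin θ) (Ioo 0 Real.pi) :=
    (lintegral_ofReal_ne_top_iff_integrable ((mg.pow 2).mul ms) nnI).1 hBt
  have hAe : A = ENNReal.ofReal (∫ θ in Ioo 0 Real.pi,
      (g' θ + Real.cos θ / Real.sin θ * g θ) ^ 2 * Real.sin θ) :=
    (ofReal_integral_eq_lintegral_ofReal hH nnH).symm
  refine le_trans ?_ (mul_le_mul_right (le_self_add : A ≤ A + B) _)
  rw [hAe, ← ENNReal.ofReal_mul (by norm_num)]
  have cov : AECover (volume.restrict (Ioo 0 Real.pi)) (𝓝[>] (0 : ℝ))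
      (fun e => Ioc e (Real.pi - e)) := by
    refine aecover_Ioo_of_Ioc (tendsto_id.mono_left nhdsWithin_le_nhds) ?_
    have : Tendsto (fun e : ℝ => Real.pi - e) (𝓝 0) (𝓝 (Real.pi - 0)) :=
      (by fun_prop : Continuous fun e : ℝ => Real.pi - e).tendsto 0
    rw [sub_zero] at this
    exact this.mono_left nhdsWithin_le_nhds
  have mL : ContinuousOn (fun θ => (g θ) ^ 2 * (Real.sin θ)⁻¹) (Ioo 0 Real.pi) :=
    (hgc.pow 2).mul hsinv
  refine le_of_tendsto (cov.lintegral_tendsto_of_countably_generated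
    (mL.aestronglyMeasurable measurableSet_Ioo).aemeasurable.ennreal_ofReal) ?_
  filter_upwards [Ioo_mem_nhdsGT (show (0 : ℝ) < Real.pi / 2 by positivity)] with e he
  have hsub : Icc e (Real.pi - e) ⊆ Ioo 0 Real.pi :=
    fun t ht => ⟨he.1.trans_le ht.1, ht.2.trans_lt (by linarith [he.1])⟩
  have hsub' := Ioc_subset_Icc_self.trans hsub
  have key := hardy_real hg hH hI he.1 he.2 (b := Real.pi - e) (by linarith [he.2])
    (by linarith [he.1])
  rw [intervalIntegral.integral_of_le (by linarith [he.2])] at key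
  rw [Measure.restrict_restrict measurableSet_Ioc, inter_eq_left.2 hsub',
    ← ofReal_integral_eq_lintegral_ofReal]
  · exact ENNReal.ofReal_le_ofReal key
  · exact ((mL.mono hsub).integrableOn_Icc).mono_set Ioc_subset_Icc_self
  · exact (ae_restrict_iff' measurableSet_Ioc).2 (Eventually.of_forall fun t ht =>
        mul_nonneg (sq_nonneg _) (inv_nonneg.2 (hpos t (hsub' ht)).le))
end

section
/- There is an absolute constant C > 0 with the following property. Let f : (0, π) → ℝ be twice weakly differentiable, i.e. f is C¹ and f′ is locally absolutely continuous with a.e. derivative f″. Then ∫_0^π ( |f″(θ)|² sin θ + |f′(θ)|² (sin θ)⁻¹ + |f(θ)|² (sin θ)⁻³ ) dθ ≤ C ( ∫_0^π |f″(θ) + (cos θ / sin θ) f′(θ) − (4 (cos θ)² / (sin θ)²) f(θ)|² sin θ dθ + ∫_0^π ( |f′(θ)|² sin θ + |f(θ)|² (sin θ)⁻¹ ) dθ ), where all integrals are allowed to be +∞. -/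
open MeasureTheory

lemma hso_ibp {u v u' v' : ℝ → ℝ} {a b : ℝ} (hab : a ≤ b)
    (hu : IntervalIntegrable u' volume a b) (hv : IntervalIntegrable v' volume a b)
    (hU : ∀ x ∈ Set.Icc a b, u x - u a = ∫ t in a..x, u' t)
    (hV : ∀ x ∈ Set.Icc a b, v x - v a = ∫ t in a..x, v' t) :
    IntervalIntegrable (fun x => u' x * v x + u x * v' x) volume a b ∧
    ∫ x in a..b, (u' x * v x + u x * v' x) = u b * v b - u a * v a := by
  have key : ∀ (w w' : ℝ → ℝ), IntervalIntegrable w' volume a b →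
      (∀ x ∈ Set.Icc a b, w x - w a = ∫ t in a..x, w' t) →
      ∃ W : ℝ → ℝ, AbsolutelyContinuousOnInterval W a b ∧ (∀ x ∈ Set.Icc a b, W x = w x) ∧
        ∀ᵐ x, x ∈ Set.Icc a b → deriv W x = w' x := by
    intro w w' hw hW
    refine ⟨fun x => w a + ∫ t in a..x, w' t, ?_, ?_, ?_⟩
    · refine AbsolutelyContinuousOnInterval.fun_add ?_
        (hw.absolutelyContinuousOnInterval_intervalIntegral (by simp))
      exact (LipschitzWith.const (w a)).lipschitzOnWith.absolutelyContinuousOnInterval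
    · intro x hx
      have := hW x hx
      simp only
      linarith
    · filter_upwards [hw.ae_hasDerivAt_integral] with x hx hx'
      rw [← Set.uIcc_of_le hab] at hx'
      exact ((hx hx' a (by simp)).const_add (w a)).deriv
  obtain ⟨U, hUac, hUe, hUd⟩ := key u u' hu hU
  obtain ⟨V, hVac, hVe, hVd⟩ := key v v' hv hV
  have haa : a ∈ Set.Icc a b := ⟨le_rfl, hab⟩
  have hbb : b ∈ Set.Icc a b := ⟨hab, le_rfl⟩
  have e := hUac.integral_deriv_mul_eq_sub hVac
  rw [hUe a haa, hUe b hbb, hVe a haa, hVe b hbb] at e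
  constructor
  · have hcu : ContinuousOn u (Set.uIcc a b) := hUac.continuousOn.congr (by
      intro x hx; rw [Set.uIcc_of_le hab] at hx; exact (hUe x hx).symm)
    have hcv : ContinuousOn v (Set.uIcc a b) := hVac.continuousOn.congr (by
      intro x hx; rw [Set.uIcc_of_le hab] at hx; exact (hVe x hx).symm)
    exact (hu.mul_continuousOn hcv).add (hv.continuousOn_mul hcu)
  · rw [← e]
    apply intervalIntegral.integral_congr_ae
    filter_upwards [hUd, hVd] with x h1 h2 hx
    rw [Set.uIoc_of_le hab] at hx
    have hx' := Set.Ioc_subset_Icc_self hx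
    rw [h1 hx', h2 hx', hUe x hx', hVe x hx']

lemma hso_lint {α : Type*} [MeasurableSpace α] {μ : Measure α} {p N : α → ℝ}
    (hp : Integrable p μ) (hp0 : ∫ x, p x ∂μ = 0) (hN : AEStronglyMeasurable N μ)
    (hN0 : ∀ᵐ x ∂μ, 0 ≤ N x) (hpN : ∀ᵐ x ∂μ, 0 ≤ p x + N x) :
    ∫⁻ x, ENNReal.ofReal (p x + N x) ∂μ ≤ ∫⁻ x, ENNReal.ofReal (N x) ∂μ := by
  by_cases h : ∫⁻ x, ENNReal.ofReal (N x) ∂μ = ⊤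
  · rw [h]; exact le_top
  have hNi : Integrable N μ :=
    (lintegral_ofReal_ne_top_iff_integrable hN hN0).1 h
  rw [← ofReal_integral_eq_lintegral_ofReal (f := fun x => p x + N x) (hp.add hNi) hpN,
    ← ofReal_integral_eq_lintegral_ofReal hNi hN0, integral_add hp hNi, hp0, zero_add]

lemma hso_alg1 {s c F p q W D g : ℝ} (hs : 0 < s) (hs1 : s ≤ 1) (hc : c ^ 2 = 1 - s ^ 2)
    (hW : 0 ≤ W) (hsW : s ^ 2 * W ≤ 1) (hD1 : s * D ≤ 2 * (W + 1)) (hD2 : -(2 * (W + 1)) ≤ s * D)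
    (hg : g = q + c / s * p - 4 * c ^ 2 / s ^ 2 * F) :
    (s * p ^ 2 / 2 + F ^ 2 * s⁻¹) * (W + 1) ≤
      (p * s * W + F * c * W + F * s * D) * p + F * s * W * q + 1 / 2 * (g ^ 2 * s) +
        10 * (p ^ 2 * s + F ^ 2 * s⁻¹) := by
  obtain ⟨r, rfl⟩ : ∃ r, F = r * s := ⟨F / s, by field_simp⟩
  have e1 : (r * s) ^ 2 * s⁻¹ = s * r ^ 2 := by field_simp
  have e2 : s * q + c * p = s * g + 4 * (1 - s ^ 2) * r := by
    rw [hg, ← hc]; field_simp; ring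
  rw [e1]
  have e3 : (p * s * W + r * s * c * W + r * s * s * D) * p + r * s * s * W * q
      = s * (p ^ 2 * W + r * W * (s * g + 4 * (1 - s ^ 2) * r) + r * p * (s * D)) := by
    rw [← e2]; ring
  rw [e3]
  have hr : 0 ≤ r ^ 2 * (1 - s ^ 2) := mul_nonneg (sq_nonneg r) (by nlinarith)
  set k := g - 4 * s * r with hk
  have h1 : -(r ^ 2 * W + k ^ 2 / 4) ≤ r * W * (s * k) := by
    have := mul_nonneg hW (sq_nonneg (r + s * k / 2))
    nlinarith [mul_le_mul_of_nonneg_right hsW (sq_nonneg k)]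
  have h2 : k ^ 2 ≤ 2 * g ^ 2 + 32 * r ^ 2 := by
    nlinarith [sq_nonneg (g + 4 * s * r)]
  have h3 : -((W + 1) * 2 * |r * p|) ≤ r * p * (s * D) := by
    have : |r * p * (s * D)| ≤ |r * p| * (2 * (W + 1)) := by
      rw [abs_mul]; exact mul_le_mul_of_nonneg_left (abs_le.2 ⟨hD2, hD1⟩) (abs_nonneg _)
    have := (abs_le.1 this).1
    linarith
  have h4 : 2 * |r * p| ≤ p ^ 2 / 2 + 2 * r ^ 2 := by
    rw [abs_mul]; nlinarith [sq_nonneg (|p| - 2 * |r|), sq_abs p, sq_abs r]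
  have h5 : 2 * |r * p| ≤ p ^ 2 + r ^ 2 := by
    rw [abs_mul]; nlinarith [sq_nonneg (|p| - |r|), sq_abs p, sq_abs r]
  have h6 := mul_le_mul_of_nonneg_left h4 hW
  have hfin : (p ^ 2 / 2 + r ^ 2) * (W + 1) ≤
      (p ^ 2 * W + r * W * (s * g + 4 * (1 - s ^ 2) * r) + r * p * (s * D)) + 1 / 2 * g ^ 2 +
        10 * (p ^ 2 + r ^ 2) := by
    have e4 : r * W * (s * g + 4 * (1 - s ^ 2) * r) = r * W * (s * k) + 4 * r ^ 2 * W := by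
      rw [hk]; ring
    rw [e4]
    nlinarith
  nlinarith [mul_le_mul_of_nonneg_left hfin hs.le]

lemma hso_alg2 {s c F p q V g R : ℝ} (hs : 0 < s) (hs1 : s ≤ 1) (hc : c ^ 2 = 1 - s ^ 2)
    (hV : 1 / (4 * s ^ 2) ≤ V)
    (hg : g = q + c / s * p - 4 * c ^ 2 / s ^ 2 * F)
    (hR : (s * p ^ 2 / 2 + F ^ 2 * s⁻¹) * V ≤ R + 1 / 2 * (g ^ 2 * s)) :
    q ^ 2 * s + p ^ 2 * s⁻¹ + F ^ 2 * (s ^ 3)⁻¹ ≤ 392 * (R + 10 * (g ^ 2 * s)) := by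
  have h0 : (s * p ^ 2 / 2 + F ^ 2 * s⁻¹) * (1 / (4 * s ^ 2)) ≤ R + 1 / 2 * (g ^ 2 * s) :=
    (mul_le_mul_of_nonneg_left hV (by positivity)).trans hR
  have e0 : (s * p ^ 2 / 2 + F ^ 2 * s⁻¹) * (1 / (4 * s ^ 2)) =
      s * ((p / s) ^ 2 / 8 + (F / s ^ 2) ^ 2 / 4) := by field_simp; ring
  have e1 : p ^ 2 * s⁻¹ = s * (p / s) ^ 2 := by field_simp
  have e2 : F ^ 2 * (s ^ 3)⁻¹ = s * (F / s ^ 2) ^ 2 := by field_simp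
  have e3 : q = g - c * (p / s) + 4 * c ^ 2 * (F / s ^ 2) := by rw [hg]; ring
  rw [e0] at h0
  rw [e1, e2]
  generalize p / s = P at *
  generalize F / s ^ 2 = Q at *
  have hc1 : c ^ 2 ≤ 1 := by nlinarith
  have hc2 : (c ^ 2) ^ 2 ≤ 1 := by nlinarith [sq_nonneg c]
  have h1 : q ^ 2 ≤ 3 * (g ^ 2 + (c * P) ^ 2 + (4 * c ^ 2 * Q) ^ 2) := by
    rw [e3]
    nlinarith [sq_nonneg (g + c * P), sq_nonneg (g - 4 * c ^ 2 * Q),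
      sq_nonneg (c * P + 4 * c ^ 2 * Q)]
  have h2 : (c * P) ^ 2 ≤ P ^ 2 := by nlinarith [sq_nonneg P]
  have h3 : (4 * c ^ 2 * Q) ^ 2 ≤ 16 * Q ^ 2 := by
    have : (4 * c ^ 2 * Q) ^ 2 = 16 * ((c ^ 2) ^ 2 * Q ^ 2) := by ring
    nlinarith [sq_nonneg Q]
  have h4 : q ^ 2 ≤ 3 * g ^ 2 + 3 * P ^ 2 + 48 * Q ^ 2 := by linarith
  have h5 := mul_le_mul_of_nonneg_left h4 hs.le
  have h6 : 0 ≤ s * P ^ 2 := by positivity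
  have h7 : 0 ≤ s * Q ^ 2 := by positivity
  have h8 : 0 ≤ g ^ 2 * s := by positivity
  nlinarith

lemma hso_W {s c e : ℝ} (he : 0 < e) (hes : e ≤ s) (hs1 : s ≤ 1) (hc1 : |c| ≤ 1) :
    0 ≤ s ^ 2 / (s ^ 2 + e) ^ 2 - 1 / (1 + e) ^ 2 ∧
    s ^ 2 * (s ^ 2 / (s ^ 2 + e) ^ 2 - 1 / (1 + e) ^ 2) ≤ 1 ∧
    |s * (2 * s * c * (e - s ^ 2) / (s ^ 2 + e) ^ 3)| ≤
      2 * ((s ^ 2 / (s ^ 2 + e) ^ 2 - 1 / (1 + e) ^ 2) + 1) ∧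
    (e ≤ s ^ 2 → 1 / (4 * s ^ 2) ≤ (s ^ 2 / (s ^ 2 + e) ^ 2 - 1 / (1 + e) ^ 2) + 1) := by
  have hs : 0 < s := he.trans_le hes
  have hx : 0 < s ^ 2 := by positivity
  have hxe : e ^ 2 ≤ s ^ 2 := by gcongr
  have hx1 : s ^ 2 ≤ 1 := by nlinarith
  generalize hxx : s ^ 2 = x at *
  have hE : 1 / (1 + e) ^ 2 ≤ 1 := by
    rw [div_le_one (by positivity)]; nlinarith
  have hE0 : 0 ≤ 1 / (1 + e) ^ 2 := by positivity
  refine ⟨?_, ?_, ?_, ?_⟩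
  · rw [sub_nonneg, div_le_div_iff₀ (by positivity) (by positivity)]
    nlinarith [mul_nonneg (sub_nonneg.2 hx1) (sub_nonneg.2 hxe)]
  · have : x * (x / (x + e) ^ 2) ≤ 1 := by
      rw [← mul_div_assoc, div_le_one (by positivity)]; nlinarith
    nlinarith [mul_nonneg hx.le hE0]
  · have e1 : s * (2 * s * c * (e - x) / (x + e) ^ 3) =
        2 * (x / (x + e) ^ 2) * (c * ((e - x) / (x + e))) := by
      rw [← hxx]; field_simp
    have h1 : |(e - x) / (x + e)| ≤ 1 := by
      rw [abs_div, abs_of_pos (show 0 < x + e by positivity), div_le_one (by positivity), abs_le]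
      constructor <;> linarith
    have h2 : |c * ((e - x) / (x + e))| ≤ 1 := by
      rw [abs_mul]; exact mul_le_one₀ hc1 (abs_nonneg _) h1
    have h3 : 0 ≤ 2 * (x / (x + e) ^ 2) := by positivity
    rw [e1, abs_mul, abs_of_nonneg h3]
    nlinarith
  · intro hex
    have : 1 / (4 * x) ≤ x / (x + e) ^ 2 := by
      rw [div_le_div_iff₀ (by positivity) (by positivity)]
      nlinarith
    linarith

lemma hso_key {f f' f'' : ℝ → ℝ}
    (hf : ∀ x ∈ Set.Ioo 0 Real.pi, HasDerivAt f (f' x) x)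
    (hf' : ContinuousOn f' (Set.Ioo 0 Real.pi))
    (hac : LocAC (Set.Ioo 0 Real.pi) f' f'') {a : ℝ} (ha : 0 < a) (ha2 : a < Real.pi / 2) :
    ∃ p : ℝ → ℝ, IntegrableOn p (Set.Ioc a (Real.pi - a)) ∧
      (∫ x in Set.Ioc a (Real.pi - a), p x) = 0 ∧
      ∀ θ ∈ Set.Ioc a (Real.pi - a),
        0 ≤ p θ + 10 * ((f'' θ + Real.cos θ / Real.sin θ * f' θ -
                      4 * (Real.cos θ) ^ 2 / (Real.sin θ) ^ 2 * f θ) ^ 2 * Real.sin θ +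
              ((f' θ) ^ 2 * Real.sin θ + (f θ) ^ 2 * (Real.sin θ)⁻¹)) ∧
        (Real.sin a ≤ Real.sin θ ^ 2 →
          (f'' θ) ^ 2 * Real.sin θ + (f' θ) ^ 2 * (Real.sin θ)⁻¹ +
              (f θ) ^ 2 * ((Real.sin θ) ^ 3)⁻¹ ≤
          392 * (p θ + 10 * ((f'' θ + Real.cos θ / Real.sin θ * f' θ -
                      4 * (Real.cos θ) ^ 2 / (Real.sin θ) ^ 2 * f θ) ^ 2 * Real.sin θ +
              ((f' θ) ^ 2 * Real.sin θ + (f θ) ^ 2 * (Real.sin θ)⁻¹)))) := by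
  have hab : a ≤ Real.pi - a := by linarith
  have hpi := Real.pi_pos
  have he : 0 < Real.sin a := Real.sin_pos_of_pos_of_lt_pi ha (by linarith)
  set e := Real.sin a with hedef
  have hsub : Set.Icc a (Real.pi - a) ⊆ Set.Ioo 0 Real.pi := fun x hx =>
    ⟨by linarith [hx.1], by linarith [hx.2]⟩
  let W : ℝ → ℝ := fun θ =>
    Real.sin θ ^ 2 / (Real.sin θ ^ 2 + e) ^ 2 - 1 / (1 + e) ^ 2
  let D : ℝ → ℝ := fun θ =>
    2 * Real.sin θ * Real.cos θ * (e - Real.sin θ ^ 2) / (Real.sin θ ^ 2 + e) ^ 3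
  have hpos : ∀ θ, 0 < Real.sin θ ^ 2 + e := fun θ => by positivity
  have hWd : ∀ θ, HasDerivAt W (D θ) θ := by
    intro θ
    have h1 : HasDerivAt (fun θ => Real.sin θ ^ 2) (2 * Real.sin θ * Real.cos θ) θ := by
      simpa using (Real.hasDerivAt_sin θ).fun_pow 2
    have h2 := ((h1.div ((h1.add_const e).pow 2)
      (pow_ne_zero 2 (hpos θ).ne')).sub_const (1 / (1 + e) ^ 2))
    convert! h2 using 1
    have := (hpos θ).ne'
    simp only [D]
    simp
    field_simp
    ring
  have hDc : Continuous D := by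
    have : ∀ θ, (Real.sin θ ^ 2 + e) ^ 3 ≠ 0 := fun θ => pow_ne_zero 3 (hpos θ).ne'
    simp only [D]
    fun_prop (disch := assumption)
  have hWc : Continuous W := continuous_iff_continuousAt.2 fun θ => (hWd θ).continuousAt
  have hfc : ContinuousOn f (Set.Ioo 0 Real.pi) := fun x hx =>
    (hf x hx).continuousAt.continuousWithinAt
  let u : ℝ → ℝ := fun θ => f θ * Real.sin θ * W θ
  let u' : ℝ → ℝ := fun θ =>
    f' θ * Real.sin θ * W θ + f θ * Real.cos θ * W θ + f θ * Real.sin θ * D θ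
  have hud : ∀ x ∈ Set.Ioo 0 Real.pi, HasDerivAt u (u' x) x := by
    intro x hx
    convert! ((hf x hx).mul (Real.hasDerivAt_sin x)).mul (hWd x) using 1
    simp only [u', Pi.mul_apply]
    ring
  have hu'c : ContinuousOn u' (Set.Ioo 0 Real.pi) := by
    have h1 := Real.continuous_sin.continuousOn (s := Set.Ioo 0 Real.pi)
    have h2 := Real.continuous_cos.continuousOn (s := Set.Ioo 0 Real.pi)
    have h3 := hWc.continuousOn (s := Set.Ioo 0 Real.pi)
    have h4 := hDc.continuousOn (s := Set.Ioo 0 Real.pi)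
    exact (((hf'.mul h1).mul h3).add ((hfc.mul h2).mul h3)).add ((hfc.mul h1).mul h4)
  have hu'i : ∀ x ∈ Set.Icc a (Real.pi - a), IntervalIntegrable u' volume a x := by
    intro x hx
    apply ContinuousOn.intervalIntegrable
    rw [Set.uIcc_of_le hx.1]
    exact hu'c.mono ((Set.Icc_subset_Icc_right hx.2).trans hsub)
  have hau : a ∈ Set.Icc a (Real.pi - a) := ⟨le_rfl, hab⟩
  have hbu : Real.pi - a ∈ Set.Icc a (Real.pi - a) := ⟨hab, le_rfl⟩
  have hWa : W a = 0 := by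
    simp only [W]; rw [← hedef]; field_simp; ring
  have hWb : W (Real.pi - a) = 0 := by
    simp only [W]; rw [Real.sin_pi_sub, ← hedef]; field_simp; ring
  obtain ⟨hi, hI⟩ := hso_ibp (u := u) (v := f') (u' := u') (v' := f'') hab (hu'i _ hbu)
    (hac.1 a (hsub hau) _ (hsub hbu))
    (by
      intro x hx
      refine (intervalIntegral.integral_eq_sub_of_hasDerivAt ?_ (hu'i x hx)).symm
      intro y hy
      rw [Set.uIcc_of_le hx.1] at hy
      exact hud y (hsub ⟨hy.1, hy.2.trans hx.2⟩))
    (fun x hx => hac.2 a (hsub hau) x (hsub hx))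
  refine ⟨fun x => u' x * f' x + u x * f'' x, ?_, ?_, ?_⟩
  · exact (intervalIntegrable_iff_integrableOn_Ioc_of_le hab).1 hi
  · rw [← intervalIntegral.integral_of_le hab, hI]
    simp [u, hWa, hWb]
  · intro θ hθ
    have hθ' := Set.Ioc_subset_Icc_self hθ
    have hs : 0 < Real.sin θ := Real.sin_pos_of_mem_Ioo (hsub hθ')
    have hs1 := Real.sin_le_one θ
    have hes : e ≤ Real.sin θ := by
      rcases le_total θ (Real.pi / 2) with h | h
      · exact Real.sin_le_sin_of_le_of_le_pi_div_two (by linarith) h hθ'.1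
      · rw [← Real.sin_pi_sub θ]
        exact Real.sin_le_sin_of_le_of_le_pi_div_two (by linarith) (by linarith)
          (by linarith [hθ'.2])
    have hc : Real.cos θ ^ 2 = 1 - Real.sin θ ^ 2 := Real.cos_sq' θ
    obtain ⟨w1, w2, w3, w4⟩ := hso_W he hes hs1 (Real.abs_cos_le_one θ)
    have w3' := abs_le.1 w3
    have key := hso_alg1 (F := f θ) (p := f' θ) (q := f'' θ) (W := W θ) (D := D θ)
      hs hs1 hc w1 w2 w3'.2 w3'.1 rfl
    constructor
    · have : 0 ≤ (Real.sin θ * f' θ ^ 2 / 2 + f θ ^ 2 * (Real.sin θ)⁻¹) * (W θ + 1) :=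
        mul_nonneg (by positivity) (by linarith [show 0 ≤ W θ from w1])
      have h2 := this.trans key
      have h3 := mul_nonneg (sq_nonneg (f'' θ + Real.cos θ / Real.sin θ * f' θ -
                      4 * (Real.cos θ) ^ 2 / (Real.sin θ) ^ 2 * f θ)) hs.le
      simp only [u, u']
      linarith
    · intro hse
      refine (hso_alg2 (R := (u' θ * f' θ + u θ * f'' θ) +
        10 * (f' θ ^ 2 * Real.sin θ + f θ ^ 2 * (Real.sin θ)⁻¹)) hs hs1 hc (w4 hse) rfl ?_).trans
        (le_of_eq (by ring))
      refine key.trans (le_of_eq ?_)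
      simp only [u, u']
      ring

/-- Second-order Hardy-type inequality of Lemma A.2 (v): if `f` is `C¹` on `(0,π)` with
derivative `f'` and `f'` is locally absolutely continuous with a.e. derivative `f''`, then
`∫ ( (f'')² sin θ + (f')² (sin θ)⁻¹ + f² (sin θ)⁻³ )
  ≤ C ( ∫ (f'' + (cos θ/sin θ) f' − (4 cos²θ/sin²θ) f)² sin θ
        + ∫ ( (f')² sin θ + f² (sin θ)⁻¹ ) )`. -/
theorem hardy_second_order :
    ∃ C : ℝ, 0 < C ∧
      ∀ f f' f'' : ℝ → ℝ,
        (∀ x ∈ Set.Ioo 0 Real.pi, HasDerivAt f (f' x) x) →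
        ContinuousOn f' (Set.Ioo 0 Real.pi) →
        LocAC (Set.Ioo 0 Real.pi) f' f'' →
        (∫⁻ θ in Set.Ioo 0 Real.pi,
            ENNReal.ofReal ((f'' θ) ^ 2 * Real.sin θ + (f' θ) ^ 2 * (Real.sin θ)⁻¹ +
              (f θ) ^ 2 * ((Real.sin θ) ^ 3)⁻¹)) ≤
          ENNReal.ofReal C *
            ((∫⁻ θ in Set.Ioo 0 Real.pi,
                ENNReal.ofReal
                  ((f'' θ + Real.cos θ / Real.sin θ * f' θ -
                      4 * (Real.cos θ) ^ 2 / (Real.sin θ) ^ 2 * f θ) ^ 2 * Real.sin θ)) +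
             (∫⁻ θ in Set.Ioo 0 Real.pi,
                ENNReal.ofReal
                  ((f' θ) ^ 2 * Real.sin θ + (f θ) ^ 2 * (Real.sin θ)⁻¹))) := by
  refine ⟨3920, by norm_num, ?_⟩
  intro f f' f'' hf hf' hac
  have hfc : ContinuousOn f (Set.Ioo 0 Real.pi) := fun x hx =>
    (hf x hx).continuousAt.continuousWithinAt
  have hsinne : ∀ x ∈ Set.Ioo 0 Real.pi, Real.sin x ≠ 0 := fun x hx =>
    (Real.sin_pos_of_mem_Ioo hx).ne'
  have hsc : ContinuousOn Real.sin (Set.Ioo 0 Real.pi) := Real.continuous_sin.continuousOn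
  have hcc : ContinuousOn Real.cos (Set.Ioo 0 Real.pi) := Real.continuous_cos.continuousOn
  have hBc : ContinuousOn (fun θ => (f' θ) ^ 2 * Real.sin θ + (f θ) ^ 2 * (Real.sin θ)⁻¹)
      (Set.Ioo 0 Real.pi) :=
    ((hf'.pow 2).mul hsc).add ((hfc.pow 2).mul (hsc.inv₀ hsinne))
  set A : ℝ → ℝ := fun θ => (f'' θ + Real.cos θ / Real.sin θ * f' θ -
                      4 * (Real.cos θ) ^ 2 / (Real.sin θ) ^ 2 * f θ) ^ 2 * Real.sin θ with hA
  set B : ℝ → ℝ := fun θ => (f' θ) ^ 2 * Real.sin θ + (f θ) ^ 2 * (Real.sin θ)⁻¹ with hB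
  set L : ℝ → ℝ := fun θ => (f'' θ) ^ 2 * Real.sin θ + (f' θ) ^ 2 * (Real.sin θ)⁻¹ +
              (f θ) ^ 2 * ((Real.sin θ) ^ 3)⁻¹ with hL
  have hA0 : ∀ x ∈ Set.Ioo 0 Real.pi, 0 ≤ A x := fun x hx =>
    mul_nonneg (sq_nonneg _) (Real.sin_pos_of_mem_Ioo hx).le
  have hB0 : ∀ x ∈ Set.Ioo 0 Real.pi, 0 ≤ B x := fun x hx => by
    have := Real.sin_pos_of_mem_Ioo hx
    simp only [hB]; positivity
  have hRHS : ∫⁻ θ in Set.Ioo 0 Real.pi, ENNReal.ofReal (10 * (A θ + B θ)) =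
      ENNReal.ofReal 10 * ((∫⁻ θ in Set.Ioo 0 Real.pi, ENNReal.ofReal (A θ)) +
        ∫⁻ θ in Set.Ioo 0 Real.pi, ENNReal.ofReal (B θ)) := by
    rw [← lintegral_add_right' _ (hBc.aemeasurable measurableSet_Ioo).ennreal_ofReal,
      ← lintegral_const_mul' _ _ ENNReal.ofReal_ne_top]
    refine setLIntegral_congr_fun measurableSet_Ioo fun x hx => ?_
    rw [ENNReal.ofReal_mul (by norm_num), ENNReal.ofReal_add (hA0 x hx) (hB0 x hx)]
  let α : ℕ → ℝ := fun n => 1 / ((n : ℝ) + 1)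
  have hα0 : ∀ n, 0 < α n := fun n => by simp only [α]; positivity
  have hα1 : ∀ n, α n ≤ 1 := fun n => by
    simp only [α]; rw [div_le_one (by positivity)]; linarith [(Nat.cast_nonneg n : (0 : ℝ) ≤ n)]
  have hpi3 := Real.pi_gt_three
  let S : ℕ → Set ℝ := fun n =>
    {θ | θ ∈ Set.Ioo 0 Real.pi ∧ Real.sin (α n) ≤ Real.sin θ ^ 2}
  have hSm : ∀ n, MeasurableSet (S n) := fun n =>
    measurableSet_Ioo.inter (measurableSet_le measurable_const (Real.measurable_sin.pow_const 2))
  have hαanti : Antitone α := fun m n hmn => by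
    simp only [α]; gcongr
  have hSmono : Monotone S := by
    intro m n hmn θ hθ
    refine ⟨hθ.1, le_trans ?_ hθ.2⟩
    exact Real.sin_le_sin_of_le_of_le_pi_div_two (by linarith [hα0 n]) (by linarith [hα1 m])
      (hαanti hmn)
  have hSU : (⋃ n, S n) = Set.Ioo 0 Real.pi := by
    ext θ
    simp only [Set.mem_iUnion]
    constructor
    · rintro ⟨n, hn⟩; exact hn.1
    · intro hθ
      obtain ⟨n, hn⟩ := exists_nat_one_div_lt (pow_pos (Real.sin_pos_of_mem_Ioo hθ) 2)
      exact ⟨n, hθ, (Real.sin_le (hα0 n).le).trans hn.le⟩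
  conv_lhs => rw [← hSU]
  rw [setLIntegral_iUnion_of_directed _ hSmono.directed_le]
  refine iSup_le fun n => ?_
  have ha := hα0 n
  have ha2 : α n < Real.pi / 2 := by linarith [hα1 n]
  obtain ⟨p, hp, hp0, hpt⟩ := hso_key hf hf' hac ha ha2
  have hJ : Set.Ioc (α n) (Real.pi - α n) ⊆ Set.Ioo 0 Real.pi := fun x hx =>
    ⟨by linarith [hx.1], by linarith [hx.2]⟩
  have hSJ : S n ⊆ Set.Ioc (α n) (Real.pi - α n) := by
    intro θ hθ
    obtain ⟨⟨h0, h1⟩, h2⟩ := hθ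
    have hs : 0 < Real.sin θ := Real.sin_pos_of_mem_Ioo ⟨h0, h1⟩
    have hs1 := Real.sin_le_one θ
    have hsn : 0 < Real.sin (α n) := Real.sin_pos_of_pos_of_lt_pi ha (by linarith)
    have hlt : Real.sin (α n) < 1 := (Real.sin_lt ha).trans_le (hα1 n)
    have hle : Real.sin (α n) < Real.sin θ := by
      rcases hs1.lt_or_eq with h | h
      · nlinarith
      · rw [h]; exact hlt
    constructor
    · by_contra! hcon
      have := Real.sin_le_sin_of_le_of_le_pi_div_two (by linarith) ha2.le hcon
      linarith
    · by_contra! hcon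
      have := Real.sin_le_sin_of_le_of_le_pi_div_two (x := Real.pi - θ) (by linarith) ha2.le
        (by linarith)
      rw [Real.sin_pi_sub] at this
      linarith
  have hmJ : MeasurableSet (Set.Ioc (α n) (Real.pi - α n)) := measurableSet_Ioc
  have hNm : AEStronglyMeasurable (fun θ => 10 * (A θ + B θ))
      (volume.restrict (Set.Ioc (α n) (Real.pi - α n))) := by
    have h2 : AEStronglyMeasurable f'' (volume.restrict (Set.Ioc (α n) (Real.pi - α n))) :=
      (hac.1 (α n) ⟨ha, by linarith⟩ (Real.pi - α n) ⟨by linarith, by linarith⟩).1.1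
    have hco : ∀ k : ℝ → ℝ, ContinuousOn k (Set.Ioo 0 Real.pi) →
        AEStronglyMeasurable k (volume.restrict (Set.Ioc (α n) (Real.pi - α n))) :=
      fun k hk => (hk.mono hJ).aestronglyMeasurable hmJ
    have h3 := hco (fun θ => Real.cos θ / Real.sin θ * f' θ) ((hcc.div hsc hsinne).mul hf')
    have h4 := hco (fun θ => 4 * (Real.cos θ) ^ 2 / (Real.sin θ) ^ 2 * f θ)
      (((continuousOn_const.mul (hcc.pow 2)).div (hsc.pow 2)
        (fun x hx => pow_ne_zero 2 (hsinne x hx))).mul hfc)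
    exact (((((h2.add h3).sub h4).pow 2).mul (hco _ hsc)).add (hco B hBc)).const_mul 10
  calc ∫⁻ θ in S n, ENNReal.ofReal (L θ)
      ≤ ∫⁻ θ in S n, ENNReal.ofReal (392 * (p θ + 10 * (A θ + B θ))) := by
        refine setLIntegral_mono' (hSm n) fun θ hθ => ?_
        exact ENNReal.ofReal_le_ofReal ((hpt θ (hSJ hθ)).2 hθ.2)
    _ ≤ ∫⁻ θ in Set.Ioc (α n) (Real.pi - α n),
          ENNReal.ofReal (392 * (p θ + 10 * (A θ + B θ))) := lintegral_mono_set hSJ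
    _ = ENNReal.ofReal 392 * ∫⁻ θ in Set.Ioc (α n) (Real.pi - α n),
          ENNReal.ofReal (p θ + 10 * (A θ + B θ)) := by
        rw [← lintegral_const_mul' _ _ ENNReal.ofReal_ne_top]
        simp_rw [ENNReal.ofReal_mul (show (0 : ℝ) ≤ 392 by norm_num)]
    _ ≤ ENNReal.ofReal 392 * ∫⁻ θ in Set.Ioc (α n) (Real.pi - α n),
          ENNReal.ofReal (10 * (A θ + B θ)) := by
        gcongr ENNReal.ofReal 392 * ?_
        refine hso_lint hp hp0 hNm ?_ ?_
        · refine (ae_restrict_iff' hmJ).2 (Filter.Eventually.of_forall fun θ hθ => ?_)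
          have := hA0 θ (hJ hθ)
          have := hB0 θ (hJ hθ)
          positivity
        · exact (ae_restrict_iff' hmJ).2 (Filter.Eventually.of_forall fun θ hθ => (hpt θ hθ).1)
    _ ≤ ENNReal.ofReal 392 * ∫⁻ θ in Set.Ioo 0 Real.pi, ENNReal.ofReal (10 * (A θ + B θ)) := by
        gcongr ENNReal.ofReal 392 * ?_
        exact lintegral_mono_set hJ
    _ = _ := by
        rw [hRHS, ← mul_assoc, ← ENNReal.ofReal_mul (by norm_num)]
        rw [show (392 : ℝ) * 10 = 3920 by norm_num]
end

section
/- There is an absolute constant C > 0 with the following property. Let h : [0, π] → ℝ be continuous with h(0) = h(π) = 0, and suppose h is locally absolutely continuous on (0, π) with a.e. derivative h′. Then ∫_0^π h(θ)² (sin θ)⁻³ dθ ≤ C ( ∫_0^π h′(θ)² (sin θ)⁻¹ dθ + ∫_0^π h(θ)² (sin θ)⁻¹ dθ ), where all integrals are allowed to be +∞. -/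
open MeasureTheory

open Set Filter Topology in
theorem hardy_meas (h h' : ℝ → ℝ) (hl : LocAC (Set.Ioo 0 Real.pi) h h') :
    AEMeasurable h' (volume.restrict (Set.Ioo 0 Real.pi)) := by
  have hpi := Real.pi_pos
  have e : Set.Ioo 0 Real.pi ⊆ ⋃ n : ℕ, Set.Ioc (Real.pi/(n+3)) (Real.pi - Real.pi/(n+3)) := by
    intro x hx
    have ht : Tendsto (fun n : ℕ => Real.pi/((n:ℝ)+3)) atTop (𝓝 0) := by
      apply Tendsto.div_atTop tendsto_const_nhds
      exact tendsto_atTop_add_const_right _ _ tendsto_natCast_atTop_atTop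
    have h1 := ht.eventually (gt_mem_nhds hx.1)
    have h2 := ht.eventually (gt_mem_nhds (sub_pos.2 hx.2))
    obtain ⟨n, a, b⟩ := (h1.and h2).exists
    exact mem_iUnion.2 ⟨n, a, by linarith⟩
  refine AEMeasurable.mono_measure ?_ (Measure.restrict_mono e le_rfl)
  rw [aemeasurable_iUnion_iff]
  intro n
  have p : 0 < Real.pi/((n:ℝ)+3) := by positivity
  have q : Real.pi/((n:ℝ)+3) ≤ Real.pi/3 := by
    apply div_le_div_of_nonneg_left hpi.le (by norm_num) 
    have : (0:ℝ) ≤ n := n.cast_nonneg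
    linarith
  exact (hl.1 (Real.pi/((n:ℝ)+3)) ⟨p, by linarith⟩ (Real.pi - Real.pi/((n:ℝ)+3))
    ⟨by linarith, by linarith⟩).1.aestronglyMeasurable.aemeasurable

open Set Filter Topology in
theorem hardy_pt (h h' : ℝ → ℝ) (h0 : Tendsto h (𝓝[>] 0) (𝓝 0))
    (hl : LocAC (Set.Ioo 0 Real.pi) h h') (θ : ℝ) (hθ : θ ∈ Set.Ioo 0 Real.pi) :
    ENNReal.ofReal (h θ ^ 2) ≤ ENNReal.ofReal θ *
      ∫⁻ t in Set.Ioo 0 θ, ENNReal.ofReal (h' t ^ 2) := by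
  have key : ‖h θ‖ₑ ≤ ∫⁻ t in Set.Ioo 0 θ, ‖h' t‖ₑ := by
    have ht : Tendsto (fun ε => ‖h θ - h ε‖ₑ) (𝓝[>] 0) (𝓝 ‖h θ‖ₑ) := by
      have := (tendsto_const_nhds (x := h θ)).sub h0
      rw [sub_zero] at this
      exact (continuous_enorm.tendsto _).comp this
    refine le_of_tendsto ht ?_
    filter_upwards [Ioo_mem_nhdsGT hθ.1] with ε hε
    rw [hl.2 ε ⟨hε.1, hε.2.trans hθ.2⟩ θ hθ, intervalIntegral.integral_of_le hε.2.le]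
    refine (enorm_integral_le_lintegral_enorm _).trans ?_
    rw [← restrict_Ioo_eq_restrict_Ioc]
    exact lintegral_mono_set (Ioo_subset_Ioo_left hε.1.le)
  have sq : ∀ x : ℝ, ENNReal.ofReal (x ^ 2) = ‖x‖ₑ ^ 2 := by
    intro x
    rw [← sq_abs, ENNReal.ofReal_pow (abs_nonneg _), Real.enorm_eq_ofReal_abs]
  simp_rw [sq]
  have hm : AEMeasurable h' (volume.restrict (Set.Ioo 0 θ)) :=
    (hardy_meas h h' hl).mono_measure (Measure.restrict_mono (Ioo_subset_Ioo_right hθ.2.le) le_rfl)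
  have H := ENNReal.lintegral_mul_le_Lp_mul_Lq (volume.restrict (Set.Ioo 0 θ))
    Real.HolderConjugate.two_two (f := fun _ => 1) (g := fun t => ‖h' t‖ₑ)
    aemeasurable_const hm.enorm
  simp only [Pi.mul_apply, one_mul, one_pow, lintegral_const, Measure.restrict_apply_univ,
    Real.volume_Ioo, sub_zero, ENNReal.rpow_two] at H
  calc ‖h θ‖ₑ ^ 2 ≤ (ENNReal.ofReal θ ^ (1/2:ℝ) * (∫⁻ t in Set.Ioo 0 θ, ‖h' t‖ₑ ^ 2) ^ (1/2:ℝ)) ^ 2 := by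
        gcongr; exact key.trans H
    _ = _ := by
        rw [mul_pow, ← ENNReal.rpow_two, ← ENNReal.rpow_two, ← ENNReal.rpow_mul, ← ENNReal.rpow_mul]
        norm_num

open Set Filter Topology in
theorem hardy_tail (t : ℝ) (ht : 0 < t) :
    ∫⁻ θ in Set.Ioi t, ENNReal.ofReal (θ ^ (-2:ℝ)) = ENNReal.ofReal t⁻¹ := by
  rw [← ofReal_integral_eq_lintegral_ofReal]
  · rw [integral_Ioi_rpow_of_lt (by norm_num) ht]
    norm_num [Real.rpow_neg_one]
  · exact integrableOn_Ioi_rpow_of_lt (by norm_num) ht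
  · filter_upwards [ae_restrict_mem measurableSet_Ioi] with x hx
    exact Real.rpow_nonneg (ht.trans hx).le _

open Set Filter Topology in
theorem hardy_half (h h' : ℝ → ℝ) (h0 : Tendsto h (𝓝[>] 0) (𝓝 0))
    (hl : LocAC (Set.Ioo 0 Real.pi) h h') :
    ∫⁻ θ in Set.Ioc 0 (Real.pi/2), ENNReal.ofReal ((h θ) ^ 2 * ((Real.sin θ) ^ 3)⁻¹) ≤
      ENNReal.ofReal ((Real.pi/2)^3) *
        ∫⁻ θ in Set.Ioo 0 Real.pi, ENNReal.ofReal ((h' θ) ^ 2 * (Real.sin θ)⁻¹) := by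
  have hpi := Real.pi_pos
  let K : ℝ → ℝ → ENNReal := fun θ t =>
    (Set.Ioi t).indicator (fun θ => ENNReal.ofReal (θ ^ (-2:ℝ))) θ * ENNReal.ofReal (h' t ^ 2)
  have hF : AEMeasurable (fun t => ENNReal.ofReal (h' t ^ 2)) (volume.restrict (Set.Ioo 0 Real.pi)) :=
    ((hardy_meas h h' hl).pow_const 2).ennreal_ofReal
  have hK : AEMeasurable (Function.uncurry K)
      ((volume.restrict (Set.Ioc 0 (Real.pi/2))).prod (volume.restrict (Set.Ioo 0 Real.pi))) := by
    refine AEMeasurable.mul (f := fun p : ℝ × ℝ => (Set.Ioi p.2).indicator (fun θ => ENNReal.ofReal (θ ^ (-2:ℝ))) p.1) ?_ hF.comp_snd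
    have : (fun p : ℝ × ℝ => (Set.Ioi p.2).indicator (fun θ => ENNReal.ofReal (θ ^ (-2:ℝ))) p.1)
      = {p : ℝ × ℝ | p.2 < p.1}.indicator (fun p => ENNReal.ofReal (p.1 ^ (-2:ℝ))) := by
      ext p; simp [indicator]
    rw [this]
    exact (Measurable.indicator (by fun_prop) (measurableSet_lt measurable_snd measurable_fst)).aemeasurable
  calc _ ≤ ∫⁻ θ in Set.Ioc 0 (Real.pi/2), ENNReal.ofReal ((Real.pi/2)^3) *
        ∫⁻ t in Set.Ioo 0 Real.pi, K θ t := by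
        refine setLIntegral_mono' measurableSet_Ioc ?_
        intro θ hθ
        have hθ' : θ ∈ Set.Ioo 0 Real.pi := ⟨hθ.1, by linarith [hθ.2]⟩
        have e1 : ∫⁻ t in Set.Ioo 0 Real.pi, K θ t = ENNReal.ofReal (θ ^ (-2:ℝ)) *
            ∫⁻ t in Set.Ioo 0 θ, ENNReal.ofReal (h' t ^ 2) := by
          rw [← lintegral_const_mul' _ _ ENNReal.ofReal_ne_top]
          have : ∀ t, K θ t = (Set.Iio θ).indicator (fun t => ENNReal.ofReal (θ ^ (-2:ℝ)) * ENNReal.ofReal (h' t ^ 2)) t := by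
            intro t
            by_cases c : t < θ <;> simp [K, indicator, c]
          simp_rw [this]
          rw [setLIntegral_indicator measurableSet_Iio]
          congr 2
          ext x
          simp only [mem_inter_iff, mem_Iio, mem_Ioo]
          constructor
          · rintro ⟨a, b, c⟩; exact ⟨b, a⟩
          · rintro ⟨a, b⟩; exact ⟨b, a, b.trans hθ'.2⟩
        rw [e1]
        have hs : 2 / Real.pi * θ ≤ Real.sin θ := Real.mul_le_sin hθ.1.le hθ.2
        have hp : 0 < 2 / Real.pi * θ := mul_pos (by positivity) hθ.1
        have hi : ((Real.sin θ)^3)⁻¹ ≤ (Real.pi/2)^3 * θ ^ (-2:ℝ) * θ⁻¹ := by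
          calc ((Real.sin θ)^3)⁻¹ ≤ ((2 / Real.pi * θ)^3)⁻¹ := by gcongr
            _ = _ := by
              have := hθ.1.ne'
              rw [Real.rpow_neg hθ.1.le, Real.rpow_two]
              field_simp
        calc ENNReal.ofReal (h θ ^ 2 * (Real.sin θ ^ 3)⁻¹) 
            ≤ ENNReal.ofReal (((Real.pi/2)^3 * θ ^ (-2:ℝ) * θ⁻¹) * h θ ^ 2) := by
              apply ENNReal.ofReal_le_ofReal
              rw [mul_comm]
              gcongr
          _ = ENNReal.ofReal ((Real.pi/2)^3) * (ENNReal.ofReal (θ ^ (-2:ℝ)) * (ENNReal.ofReal θ⁻¹ * ENNReal.ofReal (h θ ^ 2))) := by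
              have := hθ.1
              rw [← ENNReal.ofReal_mul (by positivity), ← ENNReal.ofReal_mul (by positivity), ← ENNReal.ofReal_mul (by positivity)]
              congr 1; ring
          _ ≤ ENNReal.ofReal ((Real.pi/2)^3) * (ENNReal.ofReal (θ ^ (-2:ℝ)) * (ENNReal.ofReal θ⁻¹ * (ENNReal.ofReal θ *
                  ∫⁻ t in Set.Ioo 0 θ, ENNReal.ofReal (h' t ^ 2)))) := by
              gcongr
              exact hardy_pt h h' h0 hl θ hθ'
          _ = _ := by
              rw [← mul_assoc (ENNReal.ofReal θ⁻¹), ← ENNReal.ofReal_mul (inv_nonneg.2 hθ.1.le), inv_mul_cancel₀ hθ.1.ne']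
              simp
    _ = ENNReal.ofReal ((Real.pi/2)^3) * ∫⁻ t in Set.Ioo 0 Real.pi, ∫⁻ θ in Set.Ioc 0 (Real.pi/2), K θ t := by
        rw [lintegral_const_mul' _ _ ENNReal.ofReal_ne_top, lintegral_lintegral_swap hK]
    _ ≤ _ := by
        gcongr ENNReal.ofReal ((Real.pi/2)^3) * ?_
        refine setLIntegral_mono' measurableSet_Ioo ?_
        intro t ht
        have hs := Real.sin_pos_of_mem_Ioo ht
        calc ∫⁻ θ in Set.Ioc 0 (Real.pi/2), K θ t ≤ ∫⁻ θ, K θ t := setLIntegral_le_lintegral _ _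
          _ = ENNReal.ofReal t⁻¹ * ENNReal.ofReal (h' t ^ 2) := by
            simp only [K]
            rw [lintegral_mul_const' _ _ ENNReal.ofReal_ne_top, lintegral_indicator measurableSet_Ioi, hardy_tail t ht.1]
          _ ≤ _ := by
            rw [← ENNReal.ofReal_mul (inv_nonneg.2 ht.1.le), mul_comm]
            apply ENNReal.ofReal_le_ofReal
            have := Real.sin_le ht.1.le
            gcongr

theorem hardy_refl (f : ℝ → ENNReal) (a b : ℝ) :
    ∫⁻ θ in Set.Ioo a b, f (Real.pi - θ) = ∫⁻ θ in Set.Ioo (Real.pi - b) (Real.pi - a), f θ := by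
  have hm : MeasurePreserving (fun x : ℝ => Real.pi - x) volume volume :=
    Measure.measurePreserving_sub_left volume Real.pi
  have he : MeasurableEmbedding (fun x : ℝ => Real.pi - x) :=
    (MeasurableEquiv.subLeft Real.pi).measurableEmbedding
  rw [← hm.setLIntegral_comp_preimage_emb he]
  simp

/-- The intermediate Hardy-type inequality (eli2.6): if `h : [0,π] → ℝ` is continuous with
`h(0) = h(π) = 0` and locally absolutely continuous on `(0,π)` with a.e. derivative `h'`,
then `∫ h² (sin θ)⁻³ ≤ C ( ∫ (h')² (sin θ)⁻¹ + ∫ h² (sin θ)⁻¹ )`. -/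
theorem hardy_vanishing_boundary :
    ∃ C : ℝ, 0 < C ∧
      ∀ h h' : ℝ → ℝ,
        ContinuousOn h (Set.Icc 0 Real.pi) →
        h 0 = 0 → h Real.pi = 0 →
        LocAC (Set.Ioo 0 Real.pi) h h' →
        (∫⁻ θ in Set.Ioo 0 Real.pi,
            ENNReal.ofReal ((h θ) ^ 2 * ((Real.sin θ) ^ 3)⁻¹)) ≤
          ENNReal.ofReal C *
            ((∫⁻ θ in Set.Ioo 0 Real.pi,
                ENNReal.ofReal ((h' θ) ^ 2 * (Real.sin θ)⁻¹)) +
             (∫⁻ θ in Set.Ioo 0 Real.pi,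
                ENNReal.ofReal ((h θ) ^ 2 * (Real.sin θ)⁻¹))) := by
  have hpi := Real.pi_pos
  refine ⟨(Real.pi/2)^3 + (Real.pi/2)^3, by positivity, ?_⟩
  intro h h' hc h0 hp hl
  have t0 : Filter.Tendsto h (nhdsWithin 0 (Set.Ioi 0)) (nhds 0) := by
    have := hc 0 ⟨le_rfl, hpi.le⟩
    rw [ContinuousWithinAt, h0] at this
    refine this.mono_left ?_
    rw [← nhdsWithin_Ioo_eq_nhdsGT hpi]
    exact nhdsWithin_mono _ Set.Ioo_subset_Icc_self
  have t1 : Filter.Tendsto (fun x => h (Real.pi - x)) (nhdsWithin 0 (Set.Ioi 0)) (nhds 0) := by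
    have := hc Real.pi ⟨hpi.le, le_rfl⟩
    rw [ContinuousWithinAt, hp] at this
    refine this.comp ?_
    rw [← nhdsWithin_Ioo_eq_nhdsGT hpi]
    refine tendsto_nhdsWithin_iff.2 ⟨?_, ?_⟩
    · have c : Continuous (fun x : ℝ => Real.pi - x) := by fun_prop
      have := c.tendsto 0
      rw [sub_zero] at this
      exact this.mono_left nhdsWithin_le_nhds
    · filter_upwards [self_mem_nhdsWithin] with x hx
      exact ⟨by linarith [hx.2], by linarith [hx.1]⟩
  have mem : ∀ x ∈ Set.Ioo 0 Real.pi, Real.pi - x ∈ Set.Ioo 0 Real.pi := fun x hx =>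
    ⟨by linarith [hx.2], by linarith [hx.1]⟩
  have hl' : LocAC (Set.Ioo 0 Real.pi) (fun x => h (Real.pi - x)) (fun x => - h' (Real.pi - x)) := by
    refine ⟨fun a ha b hb => ?_, fun a ha b hb => ?_⟩
    · have := (hl.1 _ (mem a ha) _ (mem b hb)).comp_sub_left Real.pi
      simp only [sub_sub_cancel] at this
      exact this.neg
    · rw [intervalIntegral.integral_neg, intervalIntegral.integral_comp_sub_left (fun x => h' x),
        ← intervalIntegral.integral_symm]
      exact hl.2 _ (mem a ha) _ (mem b hb)
  have A := hardy_half h h' t0 hl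
  have B := hardy_half _ _ t1 hl'
  simp only [neg_sq] at B
  have r1 := hardy_refl (fun θ => ENNReal.ofReal ((h' θ) ^ 2 * (Real.sin θ)⁻¹)) 0 Real.pi
  have r2 := hardy_refl (fun θ => ENNReal.ofReal ((h θ) ^ 2 * ((Real.sin θ)^3)⁻¹)) 0 (Real.pi/2)
  simp only [Real.sin_pi_sub, sub_self, sub_zero, sub_half] at r1 r2
  rw [r1, ← restrict_Ioo_eq_restrict_Ioc, r2] at B
  rw [← Set.Ioc_union_Ioo_eq_Ioo (show (0:ℝ) ≤ Real.pi/2 by positivity) (show Real.pi/2 < Real.pi by linarith)]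
  refine (lintegral_union_le _ _ _).trans ((add_le_add A B).trans ?_)
  rw [Set.Ioc_union_Ioo_eq_Ioo (show (0:ℝ) ≤ Real.pi/2 by positivity) (show Real.pi/2 < Real.pi by linarith),
    ← add_mul, ← ENNReal.ofReal_add (by positivity) (by positivity)]
  gcongr
  exact le_self_add
end

section
/- Let r, θ, a, M, c be real numbers with sin θ ≠ 0, q² := r² + a² (cos θ)² ≠ 0, Δ := r² + a² − 2Mr ≠ 0, and set p := 2Mr/q² and Σ² := (r² + a²)² − a² (sin θ)² Δ. Consider the symmetric 3×3 matrix G with entries G₁₁ = (q²/Δ)(1 − c²) + (p + 1)c², G₁₂ = p c, G₁₃ = −a (sin θ)² (p + 1) c, G₂₂ = p − 1, G₂₃ = −a (sin θ)² p, G₃₃ = q² (sin θ)² + (p + 1) a² (sin θ)⁴. Then det G = −q² (sin θ)², G is invertible, and its inverse is the symmetric matrix H with H₁₁ = Δ/q², H₁₂ = p c, H₁₃ = a c / q², H₂₂ = −(p + 1)c² − (q² + (p + 1) a² (sin θ)²)(1 − c²)/Δ, H₂₃ = −a p (1 − c²)/Δ, H₃₃ = (Δ − a² (sin θ)² (1 −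 c²))/(q² Δ (sin θ)²). -/
/-- The `(r, t₊, φ₊)`-block of the Kerr metric in regularized coordinates (exp1), with the
cutoff value `χ(r)` replaced by a parameter `c`, has determinant `−q² sin²θ` and explicit
inverse given by the components of (exp2.1). -/
theorem kerr_block_inverse (r θ a M c Δ q2 Sig2 p : ℝ)
    (hsin : Real.sin θ ≠ 0)
    (hq : q2 = r ^ 2 + a ^ 2 * (Real.cos θ) ^ 2)
    (hq0 : q2 ≠ 0)
    (hΔ : Δ = r ^ 2 + a ^ 2 - 2 * M * r)
    (hΔ0 : Δ ≠ 0)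
    (hp : p = 2 * M * r / q2)
    (hSig : Sig2 = (r ^ 2 + a ^ 2) ^ 2 - a ^ 2 * (Real.sin θ) ^ 2 * Δ)
    (G H : Matrix (Fin 3) (Fin 3) ℝ)
    (hG : G = !![q2 / Δ * (1 - c ^ 2) + (p + 1) * c ^ 2,
                 p * c,
                 -a * (Real.sin θ) ^ 2 * (p + 1) * c;
                 p * c,
                 p - 1,
                 -a * (Real.sin θ) ^ 2 * p;
                 -a * (Real.sin θ) ^ 2 * (p + 1) * c,
                 -a * (Real.sin θ) ^ 2 * p,
                 q2 * (Real.sin θ) ^ 2 + (p + 1) * a ^ 2 * (Real.sin θ) ^ 4])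
    (hH : H = !![Δ / q2,
                 p * c,
                 a * c / q2;
                 p * c,
                 -(p + 1) * c ^ 2 - (q2 + (p + 1) * a ^ 2 * (Real.sin θ) ^ 2) * (1 - c ^ 2) / Δ,
                 -a * p * (1 - c ^ 2) / Δ;
                 a * c / q2,
                 -a * p * (1 - c ^ 2) / Δ,
                 (Δ - a ^ 2 * (Real.sin θ) ^ 2 * (1 - c ^ 2)) / (q2 * Δ * (Real.sin θ) ^ 2)]) :
    G.det = -q2 * (Real.sin θ) ^ 2 ∧ G * H = 1 ∧ H * G = 1 := by
  have hrel : Δ = q2 * (1 - p) + a ^ 2 * (Real.sin θ) ^ 2 := by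
    have h1 : p * q2 = 2 * M * r := by rw [hp]; field_simp
    have h2 := Real.sin_sq_add_cos_sq θ
    linear_combination hΔ - hq + h1 - a ^ 2 * h2
  clear hp hΔ hq hSig
  generalize Real.sin θ = s at *
  have hGH : G * H = 1 := by
    subst hG hH
    ext i j
    fin_cases i <;> fin_cases j <;> simp [Matrix.mul_apply, Fin.sum_univ_three] <;>
      field_simp <;> rw [hrel] <;> ring
  refine ⟨?_, hGH, mul_eq_one_comm.mp hGH⟩
  subst hG
  rw [Matrix.det_fin_three]
  simp
  field_simp
  rw [hrel]
  ring
end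

section
/- There exists ε̄ ∈ (0, 1] such that for every M > 0 and every a ∈ [0, ε̄ M], the polynomial equation r³ − 3Mr² + a²r + Ma² = 0 has exactly one solution r* in the interval (M, ∞), and this solution satisfies 3M − a²/M ≤ r* ≤ 3M. -/
theorem aux_bound (b x : ℝ) (h0 : 0 ≤ b) (h1 : b ≤ 1/4) (hx : 1 < x)
    (h : x ^ 3 - 3 * x ^ 2 + b * x + b = 0) : 3 - b ≤ x ∧ x ≤ 3 := by
  have h2 : 2 ≤ x := by
    by_contra hc
    push Not at hc
    have e1 : b * (x + 1) ≤ 1/4 * (x + 1) := by gcongr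
    have e2 : 0 < (x - 1) * (2 - x) * x := by
      have := sub_pos.2 hx
      have := sub_pos.2 hc
      positivity
    nlinarith
  have hx2 : 0 < x ^ 2 := by positivity
  constructor
  · by_contra hc
    push Not at hc
    have e1 : x ^ 2 * b < x ^ 2 * (3 - x) := by
      apply mul_lt_mul_of_pos_left _ hx2
      linarith
    have e2 : 0 ≤ b * (x ^ 2 - x - 1) := mul_nonneg h0 (by nlinarith)
    nlinarith
  · by_contra hc
    push Not at hc
    have e1 : 0 < x ^ 2 * (x - 3) := mul_pos hx2 (by linarith)
    have e2 : 0 ≤ b * (x + 1) := mul_nonneg h0 (by linarith)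
    nlinarith

theorem aux_unique (b : ℝ) (h0 : 0 ≤ b) (h1 : b ≤ 1/4) :
    ∃ x : ℝ, 1 < x ∧ x ^ 3 - 3 * x ^ 2 + b * x + b = 0 ∧
      ∀ y : ℝ, 1 < y → y ^ 3 - 3 * y ^ 2 + b * y + b = 0 → y = x := by
  have hc : ContinuousOn (fun x : ℝ => x ^ 3 - 3 * x ^ 2 + b * x + b) (Set.Icc 2 3) := by
    fun_prop
  have hm := intermediate_value_Icc (by norm_num : (2 : ℝ) ≤ 3) hc
  obtain ⟨x, hx, hxe⟩ := hm (show (0 : ℝ) ∈ _ by constructor <;> norm_num <;> linarith)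
  have hx1 : 1 < x := by linarith [hx.1]
  refine ⟨x, hx1, hxe, fun y hy hye => ?_⟩
  have hxb := (aux_bound b x h0 h1 hx1 hxe).1
  have hyb := (aux_bound b y h0 h1 hy hye).1
  have hf : (y - x) * (y ^ 2 + y * x + x ^ 2 - 3 * (y + x) + b) = 0 := by
    simp only at hxe
    linear_combination hye - hxe
  rcases mul_eq_zero.1 hf with h | h
  · linarith
  · exfalso
    have : 0 ≤ (y - 5/2) * (x - 5/2) := mul_nonneg (by linarith) (by linarith)
    nlinarith [sq_nonneg (y - 5/2), sq_nonneg (x - 5/2)]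

/-- For `a/M` small, the polynomial equation `r³ − 3Mr² + a²r + Ma² = 0` governing the
trapped set has a unique root `r*` in `(M, ∞)`, and `r* ∈ [3M − a²/M, 3M]`. -/
theorem trapped_set_radius :
    ∃ ε : ℝ, ε ∈ Set.Ioc (0 : ℝ) 1 ∧
      ∀ M a : ℝ, 0 < M → a ∈ Set.Icc 0 (ε * M) →
        (∃! r : ℝ, r ∈ Set.Ioi M ∧
          r ^ 3 - 3 * M * r ^ 2 + a ^ 2 * r + M * a ^ 2 = 0) ∧
        ∀ r : ℝ, r ∈ Set.Ioi M →
          r ^ 3 - 3 * M * r ^ 2 + a ^ 2 * r + M * a ^ 2 = 0 →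
          3 * M - a ^ 2 / M ≤ r ∧ r ≤ 3 * M := by
  refine ⟨1/2, by norm_num, fun M a hM ha => ?_⟩
  obtain ⟨c, rfl⟩ : ∃ c, a = c * M := ⟨a / M, by field_simp⟩
  obtain ⟨ha0, ha1⟩ := ha
  have hc0 : 0 ≤ c := nonneg_of_mul_nonneg_left ha0 hM
  have hc1 : c ≤ 1/2 := le_of_mul_le_mul_right ha1 hM
  have hb1 : c ^ 2 ≤ 1/4 := by nlinarith
  have hb0 := sq_nonneg c
  have key : ∀ x : ℝ, (x * M) ^ 3 - 3 * M * (x * M) ^ 2 + (c * M) ^ 2 * (x * M) + M * (c * M) ^ 2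
      = M ^ 3 * (x ^ 3 - 3 * x ^ 2 + c ^ 2 * x + c ^ 2) := fun x => by ring
  have hM3 : M ^ 3 ≠ 0 := by positivity
  have red : ∀ r : ℝ, r ∈ Set.Ioi M →
      r ^ 3 - 3 * M * r ^ 2 + (c * M) ^ 2 * r + M * (c * M) ^ 2 = 0 →
      ∃ x, r = x * M ∧ 1 < x ∧ x ^ 3 - 3 * x ^ 2 + c ^ 2 * x + c ^ 2 = 0 := by
    intro r hr h
    obtain ⟨x, rfl⟩ : ∃ x, r = x * M := ⟨r / M, by field_simp⟩
    rw [key] at h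
    have hr' : M < x * M := hr
    exact ⟨x, rfl, by nlinarith, (mul_eq_zero.1 h).resolve_left hM3⟩
  constructor
  · obtain ⟨x, hx, hxe, hu⟩ := aux_unique (c ^ 2) hb0 hb1
    refine ⟨x * M, ⟨?_, ?_⟩, ?_⟩
    · show M < x * M
      nlinarith
    · rw [key, hxe, mul_zero]
    · rintro r ⟨hr, h⟩
      obtain ⟨y, rfl, hy, hye⟩ := red r hr h
      rw [hu y hy hye]
  · intro r hr h
    obtain ⟨y, rfl, hy, hye⟩ := red r hr h
    obtain ⟨h1, h2⟩ := aux_bound (c ^ 2) y hb0 hb1 hy hye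
    have e : (c * M) ^ 2 / M = c ^ 2 * M := by field_simp
    rw [e]
    constructor <;> nlinarith
end

section
/- There exist ε̄ ∈ (0, 1] and C > 0 such that the following holds. Let M > 0 and a ∈ [0, ε̄ M], and let r* be the unique solution in (M, ∞) of r³ − 3Mr² + a²r + Ma² = 0. Then for every r ≥ M one has | r³ − 3Mr² + a²r + Ma² − (r − r*) r² | ≤ C (a²/M) r |r − r*|. -/
/-- Estimate (moro9): for `a/M` small and `r*` the unique root in `(M, ∞)` of
`r³ − 3Mr² + a²r + Ma² = 0`, one has
`| r³ − 3Mr² + a²r + Ma² − (r − r*) r² | ≤ C (a²/M) r |r − r*|` for all `r ≥ M`. -/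
theorem trapped_polynomial_approx :
    ∃ ε C : ℝ, ε ∈ Set.Ioc (0 : ℝ) 1 ∧ 0 < C ∧
      ∀ M a rs : ℝ, 0 < M → a ∈ Set.Icc 0 (ε * M) →
        rs ∈ Set.Ioi M →
        rs ^ 3 - 3 * M * rs ^ 2 + a ^ 2 * rs + M * a ^ 2 = 0 →
        ∀ r : ℝ, M ≤ r →
          |r ^ 3 - 3 * M * r ^ 2 + a ^ 2 * r + M * a ^ 2 - (r - rs) * r ^ 2| ≤
            C * (a ^ 2 / M) * r * |r - rs| := by
  refine ⟨1, 3, by norm_num, by norm_num, ?_⟩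
  intro M a rs hM _ hrs h r hr
  have hrs' : M < rs := hrs
  have hrs0 : 0 < rs := hM.trans hrs'
  have hr0 : 0 < r := lt_of_lt_of_le hM hr
  have ha : 0 ≤ a ^ 2 := sq_nonneg a
  have hd : 3 * M - rs = a ^ 2 * (rs + M) / rs ^ 2 := by
    field_simp
    linarith
  have hd0 : 0 ≤ 3 * M - rs := by rw [hd]; positivity
  have hd2 : 3 * M - rs ≤ 2 * (a ^ 2 / M) := by
    rw [hd, ← mul_div_assoc, div_le_div_iff₀ (by positivity) hM]
    have : (rs + M) * M ≤ 2 * rs ^ 2 := by nlinarith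
    nlinarith [mul_le_mul_of_nonneg_left this ha]
  have he0 : 0 ≤ M * a ^ 2 / rs := by positivity
  have he : M * a ^ 2 / rs ≤ a ^ 2 / M * r := by
    rw [div_mul_eq_mul_div, div_le_div_iff₀ hrs0 hM]
    have : M * M ≤ r * rs := by nlinarith
    nlinarith [mul_le_mul_of_nonneg_left this ha]
  have key : r ^ 3 - 3 * M * r ^ 2 + a ^ 2 * r + M * a ^ 2 - (r - rs) * r ^ 2
      = -(((3 * M - rs) * r + M * a ^ 2 / rs) * (r - rs)) := by
    field_simp
    linear_combination r * h
  rw [key, abs_neg, abs_mul, abs_of_nonneg (by positivity)]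
  apply mul_le_mul_of_nonneg_right _ (abs_nonneg _)
  nlinarith [mul_le_mul_of_nonneg_right hd2 hr0.le]
end

section
/- For every s ∈ [0, 1] one has ( 33 + s − 12·log(1 + s) − 12·s/(1 + s) ) · (1 + s)² ≥ (3 + s)³. Equivalently, 12 (1 + s)² ( s − log(1 + s) ) + 6 + 16 s − 10 s² − 12 s³ ≥ 0 for s ∈ [0, 1]. -/
/-- The inequality `ã₁′(s)(1 + s)² ≥ 1` for `s ∈ [0,1]`, in the two equivalent forms
stated in the proof of Lemma 5.3 (clan2). -/
theorem multiplier_derivative_lower_bound :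
    ∀ s ∈ Set.Icc (0 : ℝ) 1,
      (33 + s - 12 * Real.log (1 + s) - 12 * s / (1 + s)) * (1 + s) ^ 2 ≥ (3 + s) ^ 3 ∧
      12 * (1 + s) ^ 2 * (s - Real.log (1 + s)) + 6 + 16 * s - 10 * s ^ 2 - 12 * s ^ 3 ≥ 0 := by
  rintro s ⟨h0, h1⟩
  have hl : 0 ≤ s - Real.log (1 + s) := by
    have := Real.log_le_sub_one_of_pos (show 0 < 1 + s by linarith)
    linarith
  have h2 : 12 * (1 + s) ^ 2 * (s - Real.log (1 + s)) + 6 + 16 * s - 10 * s ^ 2 - 12 * s ^ 3 ≥ 0 := by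
    have ha : 0 ≤ 12 * (1 + s) ^ 2 * (s - Real.log (1 + s)) := by positivity
    have hb : 0 ≤ (1 - s) * (6 + 22 * s + 12 * s ^ 2) :=
      mul_nonneg (by linarith) (by positivity)
    linarith
  refine ⟨?_, h2⟩
  have hne : (1 + s) ≠ 0 := by linarith
  have key : (33 + s - 12 * Real.log (1 + s) - 12 * s / (1 + s)) * (1 + s) ^ 2 - (3 + s) ^ 3
      = 12 * (1 + s) ^ 2 * (s - Real.log (1 + s)) + 6 + 16 * s - 10 * s ^ 2 - 12 * s ^ 3 := by
    generalize Real.log (1 + s) = L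
    field_simp
    ring
  linarith
end

section
/- There exists a C¹ function b̃ : ℝ → ℝ, vanishing outside the interval [1/10, 1], such that for every s ∈ [1/10, 1] one has b̃′(s) + 9(1 − 10s + 18s²)/(3 + s)⁵ ≥ 0 and |b̃(s)| ≤ (√2/16)·s. -/
lemma aux_hasDeriv (x : ℝ) : HasDerivAt (fun x : ℝ => (max x 0) ^ 2) (2 * max x 0) x := by
  rcases lt_trichotomy x 0 with h | h | h
  · rw [max_eq_right h.le]
    have : HasDerivAt (fun _ : ℝ => (0:ℝ)) (2 * 0) x := by simpa using hasDerivAt_const x (0:ℝ)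
    refine this.congr_of_eventuallyEq ?_
    filter_upwards [eventually_lt_nhds h] with y hy
    simp [max_eq_right hy.le]
  · subst h
    rw [hasDerivAt_iff_isLittleO]
    have h1 : (fun y : ℝ => y ^ 2) =o[nhds 0] (fun y : ℝ => y) := by
      simpa using Asymptotics.isLittleO_pow_pow (𝕜 := ℝ) (m := 1) (n := 2) (by norm_num)
    have h2 : (fun y : ℝ => (max y 0) ^ 2) =o[nhds 0] (fun y : ℝ => y) := by
      refine Asymptotics.IsBigO.trans_isLittleO (Asymptotics.IsBigO.of_bound 1 ?_) h1
      refine Filter.Eventually.of_forall fun y => ?_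
      rcases le_total y 0 with h | h
      · simp [max_eq_right h, sq_nonneg]
      · simp [max_eq_left h]
    simpa using h2
  · rw [max_eq_left h.le]
    have : HasDerivAt (fun x : ℝ => x ^ 2) (2 * x) x := by simpa using hasDerivAt_pow 2 x
    refine this.congr_of_eventuallyEq ?_
    filter_upwards [eventually_gt_nhds h] with y hy
    simp [max_eq_left hy.le]

/-- Existence claim (moro61): there is a `C¹` function `b̃` vanishing outside `[1/10, 1]`
with `b̃′(s) + 9(1 − 10s + 18s²)/(3+s)⁵ ≥ 0` and `|b̃(s)| ≤ (√2/16)s` on `[1/10, 1]`. -/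
theorem auxiliary_multiplier_exists :
    ∃ b : ℝ → ℝ, ContDiff ℝ 1 b ∧
      (∀ s : ℝ, s ∉ Set.Icc (1 / 10 : ℝ) 1 → b s = 0) ∧
      ∀ s ∈ Set.Icc (1 / 10 : ℝ) 1,
        0 ≤ deriv b s + 9 * (1 - 10 * s + 18 * s ^ 2) / (3 + s) ^ 5 ∧
        |b s| ≤ Real.sqrt 2 / 16 * s := by
  have hp (s : ℝ) : HasDerivAt (fun s : ℝ => (s - 1/10) * (1 - s)) (11/10 - 2 * s) s := by
    have := ((hasDerivAt_id s).sub_const (1/10)).mul ((hasDerivAt_id s).const_sub 1)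
    refine this.congr_deriv ?_
    simp only [id]; ring
  have hb (s : ℝ) : HasDerivAt (fun s : ℝ => 3/20 * (max ((s - 1/10) * (1 - s)) 0) ^ 2)
      (3/20 * (2 * max ((s - 1/10) * (1 - s)) 0 * (11/10 - 2 * s))) s :=
    ((aux_hasDeriv _).comp s (hp s)).const_mul _
  refine ⟨fun s => 3/20 * (max ((s - 1/10) * (1 - s)) 0) ^ 2, ?_, ?_, ?_⟩
  · rw [contDiff_one_iff_deriv]
    refine ⟨fun s => (hb s).differentiableAt, ?_⟩
    rw [funext fun s => (hb s).deriv]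
    fun_prop
  · intro s hs
    have : (s - 1/10) * (1 - s) ≤ 0 := by
      by_contra! h
      apply hs
      constructor <;> nlinarith
    simp only [max_eq_right this]; norm_num
  · rintro s ⟨h1, h2⟩
    have hp0 : 0 ≤ (s - 1/10) * (1 - s) := mul_nonneg (by linarith) (by linarith)
    rw [(hb s).deriv]
    simp only [max_eq_left hp0]
    constructor
    · have h5 : 0 < (3 + s) ^ 5 := by positivity
      rw [show 3/20 * (2 * ((s - 1/10) * (1 - s)) * (11/10 - 2 * s))
          + 9 * (1 - 10 * s + 18 * s ^ 2) / (3 + s) ^ 5 =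
          (3/10 * ((s - 1/10) * (1 - s) * (11/10 - 2 * s)) * (3 + s) ^ 5
          + 9 * (1 - 10 * s + 18 * s ^ 2)) / (3 + s) ^ 5 by field_simp; ring]
      apply div_nonneg _ h5.le
      rcases le_total s (11/20) with h | h
      · have hq : 0 ≤ (s - 1/10) * (1 - s) * (11/10 - 2 * s) := mul_nonneg hp0 (by linarith)
        have h3 : (3:ℝ)^5 ≤ (3 + s) ^ 5 := by gcongr; linarith
        have := mul_le_mul_of_nonneg_left h3 hq
        have key : 0 ≤ 3/10 * 3^5 * ((s - 1/10) * (1 - s) * (11/10 - 2 * s))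
            + 9 * (1 - 10 * s + 18 * s ^ 2) := by
          nlinarith [mul_nonneg (sub_nonneg.2 h1) (sq_nonneg (s - 3/10)), mul_nonneg (sub_nonneg.2 h1) (sq_nonneg (s - 4/10)), mul_nonneg (sub_nonneg.2 h) (sq_nonneg (s - 3/10)), mul_nonneg (sub_nonneg.2 h) (sq_nonneg (s - 2/10)), mul_nonneg (sub_nonneg.2 h1) (sub_nonneg.2 h)]
        linarith
      · have hq : 0 ≤ (s - 1/10) * (1 - s) * (2 * s - 11/10) := mul_nonneg hp0 (by linarith)
        have h3 : (3 + s) ^ 5 ≤ (4:ℝ)^5 := by gcongr; linarith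
        have := mul_le_mul_of_nonneg_left h3 hq
        have key : 3/10 * 4^5 * ((s - 1/10) * (1 - s) * (2 * s - 11/10))
            ≤ 9 * (1 - 10 * s + 18 * s ^ 2) := by
          nlinarith [mul_nonneg (sub_nonneg.2 h) (sq_nonneg (s - 7/10)), mul_nonneg (sub_nonneg.2 h) (sq_nonneg (s - 8/10)), mul_nonneg (sub_nonneg.2 h2) (sq_nonneg (s - 7/10)), mul_nonneg (sub_nonneg.2 h) (sub_nonneg.2 h2)]
        linarith
    · rw [abs_of_nonneg (by positivity)]
      have hs2 : 1 ≤ Real.sqrt 2 := Real.one_le_sqrt.2 (by norm_num)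
      have a1 : (s - 1/10) * (1 - s) ≤ 1/4 := by nlinarith [sq_nonneg (s - 11/20)]
      have a2 : (s - 1/10) * (1 - s) ≤ s := by nlinarith
      have a3 := mul_le_mul a1 a2 hp0 (by norm_num)
      nlinarith
end

section
/- Let M > 0, K ≥ 0, C ≥ 1, T > 0 and let I : [0, T] → [0, ∞) be a measurable function such that: (i) I(t′) ≤ C·I(t) whenever 0 ≤ t ≤ t′ ≤ T; (ii) ∫_0^T I(s) ds ≤ K·M; (iii) I(0) ≤ K. Then I(s) ≤ 4C·K·M/(M + s) for every s ∈ [0, T]. -/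
open MeasureTheory

/-- The abstract pigeonhole decay argument from the proof of Corollary 1.7: a nonnegative,
measurable, almost-monotone quantity `I` on `[0, T]` with `∫_0^T I ≤ KM` and `I(0) ≤ K`
decays at the rate `I(s) ≤ 4CKM/(M+s)`. -/
theorem pigeonhole_decay (M K C T : ℝ) (I : ℝ → ℝ)
    (hM : 0 < M) (hK : 0 ≤ K) (hC : 1 ≤ C) (hT : 0 < T)
    (hmeas : Measurable I)
    (hnonneg : ∀ t ∈ Set.Icc (0 : ℝ) T, 0 ≤ I t)
    (hmono : ∀ t t' : ℝ, 0 ≤ t → t ≤ t' → t' ≤ T → I t' ≤ C * I t)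
    (hint : (∫⁻ s in Set.Icc (0 : ℝ) T, ENNReal.ofReal (I s)) ≤ ENNReal.ofReal (K * M))
    (h0 : I 0 ≤ K) :
    ∀ s ∈ Set.Icc (0 : ℝ) T, I s ≤ 4 * C * K * M / (M + s) := by
  intro s hs
  obtain ⟨hs0, hsT⟩ := hs
  have hCpos : 0 < C := by linarith
  have hIs := hnonneg s ⟨hs0, hsT⟩
  have h1 : I s ≤ C * K :=
    (hmono 0 s le_rfl hs0 hsT).trans (mul_le_mul_of_nonneg_left h0 hCpos.le)
  have h2 : ENNReal.ofReal (I s / C * s) ≤ ENNReal.ofReal (K * M) := by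
    refine le_trans ?_ hint
    calc ENNReal.ofReal (I s / C * s)
        = ∫⁻ _ in Set.Icc (0 : ℝ) s, ENNReal.ofReal (I s / C) := by
          rw [setLIntegral_const, Real.volume_Icc, sub_zero,
            ENNReal.ofReal_mul (by positivity)]
      _ ≤ ∫⁻ t in Set.Icc (0 : ℝ) s, ENNReal.ofReal (I t) := by
          refine setLIntegral_mono' measurableSet_Icc fun t ht => ?_
          apply ENNReal.ofReal_le_ofReal
          rw [div_le_iff₀ hCpos, mul_comm]
          exact hmono t s ht.1 ht.2 hsT
      _ ≤ ∫⁻ t in Set.Icc (0 : ℝ) T, ENNReal.ofReal (I t) :=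
          lintegral_mono_set (Set.Icc_subset_Icc le_rfl hsT)
  have h3 : I s / C * s ≤ K * M :=
    (ENNReal.ofReal_le_ofReal_iff (by positivity)).1 h2
  have h4 : I s * s ≤ C * (K * M) := by
    have h := mul_le_mul_of_nonneg_left h3 hCpos.le
    have e : C * (I s / C * s) = I s * s := by field_simp
    rwa [e] at h
  have h5 : I s * M ≤ C * K * M := mul_le_mul_of_nonneg_right h1 hM.le
  have h6 : 0 ≤ C * K * M := by positivity
  rw [le_div_iff₀ (by linarith)]
  nlinarith
end

section
/- There is an absolute constant C ≥ 1 with the following property. Let M > 0, α ∈ (0, 2), and C₄ ≥ 4, and let χ : ℝ → [0, 1] be a smooth nondecreasing function with χ(s) = 0 for s ≤ C₄⁴M and χ(s) = 1 for s ≥ 2C₄⁴M − 2M. Define β(r) := ∫_{8M}^r [ (4M/s² + 1/s)(1 − χ(s)) + (α/s) χ(s) ] ds for r ≥ 8M. Then C⁻¹ · r/M ≤ e^{β(r)} ≤ C · r/M for all r ∈ [8M, 10 C₄⁴ M], and C⁻¹ · C₄⁴ (r/(C₄⁴M))^α ≤ e^{β(r)} ≤ C · C₄⁴ (r/(C₄⁴M))^α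 for all r ≥ (1/10) C₄⁴ M. -/
/-- The weight function `β` of (outs50): `β(8M) = 0` and
`β′(r) = (4M/r² + 1/r)(1 − χ(r)) + (α/r)χ(r)`, written in integral form. -/
noncomputable def kerrBeta (M α : ℝ) (χ : ℝ → ℝ) (r : ℝ) : ℝ :=
  ∫ s in (8 * M)..r, ((4 * M / s ^ 2 + 1 / s) * (1 - χ s) + α / s * χ s)


noncomputable def kbInt (M α : ℝ) (χ : ℝ → ℝ) (s : ℝ) : ℝ :=
  (4 * M / s ^ 2 + 1 / s) * (1 - χ s) + α / s * χ s

lemma kbInt_ii (M α : ℝ) (χ : ℝ → ℝ) (hχ : Continuous χ) (a b : ℝ) (ha : 0 < a) (hb : 0 < b) :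
    IntervalIntegrable (kbInt M α χ) MeasureTheory.volume a b := by
  apply ContinuousOn.intervalIntegrable
  intro s hs
  have h0 : 0 < s := lt_of_lt_of_le (lt_min ha hb) hs.1
  have h1 : s ≠ 0 := h0.ne'
  have h2 : s ^ 2 ≠ 0 := pow_ne_zero 2 h1
  apply ContinuousAt.continuousWithinAt
  unfold kbInt
  have := hχ.continuousAt (x := s)
  fun_prop (disch := assumption)

lemma kb_split (M α : ℝ) (χ : ℝ → ℝ) (hM : 0 < M) (hχ : Continuous χ) (a b : ℝ)
    (ha : 0 < a) (hb : 0 < b) :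
    kerrBeta M α χ b = kerrBeta M α χ a + ∫ s in a..b, kbInt M α χ s := by
  have := intervalIntegral.integral_add_adjacent_intervals
    (kbInt_ii M α χ hχ (8 * M) a (by linarith) ha) (kbInt_ii M α χ hχ a b ha hb)
  exact this.symm

lemma kb_mid (M α : ℝ) (χ : ℝ → ℝ) (hM : 0 < M) (hα : α ∈ Set.Ioo (0 : ℝ) 2)
    (hχ : Continuous χ) (hχ1 : ∀ s : ℝ, χ s ∈ Set.Icc (0 : ℝ) 1) (a b : ℝ)
    (ha : 4 * M ≤ a) (hab : a ≤ b) :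
    0 ≤ (∫ s in a..b, kbInt M α χ s) ∧
      (∫ s in a..b, kbInt M α χ s) ≤ 2 * Real.log (b / a) := by
  have ha0 : 0 < a := by linarith
  have hb0 : 0 < b := by linarith
  have key : ∀ s ∈ Set.Icc a b, 0 ≤ kbInt M α χ s ∧ kbInt M α χ s ≤ 2 * (1 / s) := by
    intro s hs
    have hs0 : 0 < s := lt_of_lt_of_le ha0 hs.1
    obtain ⟨hx0, hx1⟩ := hχ1 s
    obtain ⟨h1, h2⟩ := hα
    have e : kbInt M α χ s = ((4 * M / s + 1) * (1 - χ s) + α * χ s) * (1 / s) := by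
      unfold kbInt; field_simp
    have hq : 4 * M / s ≤ 1 := by rw [div_le_one hs0]; linarith [hs.1]
    have hq0 : 0 ≤ 4 * M / s := by positivity
    have hi : 0 ≤ 1 / s := by positivity
    rw [e]
    constructor
    · apply mul_nonneg _ hi
      have : 0 ≤ 1 - χ s := by linarith
      positivity
    · apply mul_le_mul_of_nonneg_right _ hi
      nlinarith
  constructor
  · exact intervalIntegral.integral_nonneg hab (fun s hs => (key s hs).1)
  · rw [← integral_one_div_of_pos ha0 hb0, ← intervalIntegral.integral_const_mul]
    apply intervalIntegral.integral_mono_on hab (kbInt_ii M α χ hχ a b ha0 hb0) _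
      (fun s hs => (key s hs).2)
    apply ContinuousOn.intervalIntegrable
    intro s hs
    have h0 : s ≠ 0 := (lt_of_lt_of_le (lt_min ha0 hb0) hs.1).ne'
    apply ContinuousAt.continuousWithinAt
    fun_prop (disch := assumption)

lemma kb_first (M α R : ℝ) (χ : ℝ → ℝ) (hM : 0 < M) (hχ : Continuous χ)
    (h0 : ∀ s, s ≤ R → χ s = 0) (r : ℝ) (hr : 8 * M ≤ r) (hrR : r ≤ R) :
    kerrBeta M α χ r = Real.log (r / M) - Real.log 8 + 1 / 2 - 4 * M / r := by
  have hr0 : 0 < r := by linarith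
  have h8 : 0 < 8 * M := by linarith
  have := intervalIntegral.integral_eq_sub_of_hasDerivAt
    (f := fun s => Real.log s - 4 * M * s⁻¹) (f' := kbInt M α χ) (a := 8 * M) (b := r) ?_
    (kbInt_ii M α χ hχ _ _ h8 hr0)
  · change (∫ s in (8 * M)..r, kbInt M α χ s) = _
    rw [this, Real.log_div hr0.ne' hM.ne', Real.log_mul (by norm_num) hM.ne']
    field_simp
    ring
  · intro s hs
    rw [Set.uIcc_of_le hr] at hs
    have hs0 : 0 < s := by linarith [hs.1]
    have := (Real.hasDerivAt_log hs0.ne').sub ((hasDerivAt_inv hs0.ne').const_mul (4 * M))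
    refine this.congr_deriv ?_
    unfold kbInt
    rw [h0 s (hs.2.trans hrR)]
    field_simp
    ring

lemma kb_last (M α R : ℝ) (χ : ℝ → ℝ) (hR : 0 < R)
    (h1 : ∀ s, 2 * R ≤ s → χ s = 1) (r : ℝ) (hr : 2 * R ≤ r) :
    (∫ s in (2 * R)..r, kbInt M α χ s) = α * Real.log (r / (2 * R)) := by
  rw [← integral_one_div_of_pos (by linarith) (by linarith),
    ← intervalIntegral.integral_const_mul]
  apply intervalIntegral.integral_congr
  intro s hs
  rw [Set.uIcc_of_le hr] at hs
  simp only [kbInt, h1 s hs.1]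
  ring

lemma kb_exp (C L x y X : ℝ) (hC : C = Real.exp L) (hX : X = Real.exp x)
    (h : x - L ≤ y ∧ y ≤ x + L) : C⁻¹ * X ≤ Real.exp y ∧ Real.exp y ≤ C * X := by
  rw [hC, hX, ← Real.exp_neg, ← Real.exp_add, ← Real.exp_add, Real.exp_le_exp, Real.exp_le_exp]
  constructor <;> linarith

/-- The two-regime growth estimate (outs52) for the weight `e^β`: `e^{β(r)} ≈ r/M` for
`r ∈ [8M, 10C₄⁴M]` and `e^{β(r)} ≈ C₄⁴ (r/(C₄⁴M))^α` for `r ≥ (1/10)C₄⁴M`. -/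
theorem beta_weight_growth :
    ∃ C : ℝ, 1 ≤ C ∧
      ∀ (M α C₄ : ℝ) (χ : ℝ → ℝ),
        0 < M → α ∈ Set.Ioo (0 : ℝ) 2 → 4 ≤ C₄ →
        ContDiff ℝ (⊤ : ℕ∞) χ → Monotone χ →
        (∀ s : ℝ, χ s ∈ Set.Icc (0 : ℝ) 1) →
        (∀ s : ℝ, s ≤ C₄ ^ 4 * M → χ s = 0) →
        (∀ s : ℝ, 2 * C₄ ^ 4 * M - 2 * M ≤ s → χ s = 1) →
        (∀ r ∈ Set.Icc (8 * M) (10 * C₄ ^ 4 * M),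
          C⁻¹ * (r / M) ≤ Real.exp (kerrBeta M α χ r) ∧
          Real.exp (kerrBeta M α χ r) ≤ C * (r / M)) ∧
        (∀ r : ℝ, 1 / 10 * C₄ ^ 4 * M ≤ r →
          C⁻¹ * (C₄ ^ 4 * (r / (C₄ ^ 4 * M)) ^ α) ≤ Real.exp (kerrBeta M α χ r) ∧
          Real.exp (kerrBeta M α χ r) ≤ C * (C₄ ^ 4 * (r / (C₄ ^ 4 * M)) ^ α)) := by
  have hL1 : (1 : ℝ) ≤ Real.log 10 := by
    rw [Real.le_log_iff_exp_le (by norm_num)]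
    linarith [Real.exp_one_lt_d9]
  have hL8 : Real.log 8 ≤ Real.log 10 := Real.log_le_log (by norm_num) (by norm_num)
  have hL80 : 0 ≤ Real.log 8 := Real.log_nonneg (by norm_num)
  have hL2 : Real.log 2 ≤ Real.log 10 := Real.log_le_log (by norm_num) (by norm_num)
  have hL20 : 0 ≤ Real.log 2 := Real.log_nonneg (by norm_num)
  generalize hL : Real.log 10 = L at *
  refine ⟨Real.exp (6 * L), Real.one_le_exp (by linarith), ?_⟩
  intro M α C₄ χ hM hα hC hsm _ hχ1 h0 h1
  have hχ : Continuous χ := hsm.continuous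
  have hC4 : (256 : ℝ) ≤ C₄ ^ 4 := by
    calc (256 : ℝ) = 4 ^ 4 := by norm_num
      _ ≤ C₄ ^ 4 := by gcongr
  rw [show 10 * C₄ ^ 4 * M = 10 * (C₄ ^ 4 * M) by ring]
  simp only [show 1 / 10 * C₄ ^ 4 * M = 1 / 10 * (C₄ ^ 4 * M) by ring]
  have hRM : C₄ ^ 4 = C₄ ^ 4 * M / M := by field_simp
  have hR : 256 * M ≤ C₄ ^ 4 * M := by gcongr
  have h1' : ∀ s, 2 * (C₄ ^ 4 * M) ≤ s → χ s = 1 := fun s hs => h1 s (by nlinarith)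
  generalize C₄ ^ 4 * M = R at *
  rw [hRM]
  have hR0 : 0 < R := by linarith
  have first : ∀ r, 8 * M ≤ r → r ≤ R →
      Real.log (r / M) - L ≤ kerrBeta M α χ r ∧ kerrBeta M α χ r ≤ Real.log (r / M) + L := by
    intro r hr hrR
    have hr0 : 0 < r := by linarith
    rw [kb_first M α R χ hM hχ h0 r hr hrR]
    have : 4 * M / r ≤ 1 / 2 := by rw [div_le_iff₀ hr0]; linarith
    have : 0 ≤ 4 * M / r := by positivity
    constructor <;> linarith
  have hlog : ∀ r, 0 < r → Real.log (r / M) = Real.log (R / M) + Real.log (r / R) := by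
    intro r hr
    rw [Real.log_div hr.ne' hM.ne', Real.log_div hR0.ne' hM.ne', Real.log_div hr.ne' hR0.ne']
    ring
  have A : ∀ r, 8 * M ≤ r → r ≤ 10 * R →
      Real.log (r / M) - 3 * L ≤ kerrBeta M α χ r ∧
        kerrBeta M α χ r ≤ Real.log (r / M) + 3 * L := by
    intro r hr hr10
    have hr0 : 0 < r := by linarith
    rcases le_total r R with h | h
    · have := first r hr h
      constructor <;> linarith [this.1, this.2]
    · have f := first R (by linarith) le_rfl
      have m := kb_mid M α χ hM hα hχ hχ1 R r (by linarith) h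
      rw [kb_split M α χ hM hχ R r hR0 hr0, hlog r hr0]
      have l0 : 0 ≤ Real.log (r / R) := Real.log_nonneg (by rwa [one_le_div hR0])
      have l1 : Real.log (r / R) ≤ L := by
        rw [← hL]
        exact Real.log_le_log (by positivity) (by rwa [div_le_iff₀ hR0])
      constructor <;> linarith [f.1, f.2, m.1, m.2]
  constructor
  · intro r hr
    have hr0 : 0 < r := by linarith [hr.1]
    have a := A r hr.1 hr.2
    apply kb_exp _ _ (Real.log (r / M)) _ _ rfl (Real.exp_log (by positivity)).symm
    constructor <;> linarith [a.1, a.2]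
  · intro r hr
    have hr0 : 0 < r := by linarith
    have hα' := hα
    obtain ⟨ha0, ha2⟩ := hα'
    apply kb_exp _ _ (Real.log (R / M) + α * Real.log (r / R)) _ _ rfl
    · rw [Real.exp_add, Real.exp_log (by positivity), Real.rpow_def_of_pos (by positivity),
        mul_comm α]
    rcases le_total r (2 * R) with h | h
    · have a := A r (by linarith) (by linarith)
      rw [hlog r hr0] at a
      have l1 : Real.log (r / R) ≤ L := by
        rw [← hL]
        exact Real.log_le_log (by positivity) (by rw [div_le_iff₀ hR0]; linarith)
      have l0 : -L ≤ Real.log (r / R) := by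
        rw [← hL, ← Real.log_inv]
        exact Real.log_le_log (by norm_num) (by rw [le_div_iff₀ hR0]; linarith)
      have q : |(α - 1) * Real.log (r / R)| ≤ 1 * L := by
        rw [abs_mul]
        apply mul_le_mul _ _ (abs_nonneg _) zero_le_one
        · rw [abs_le]; constructor <;> linarith
        · rw [abs_le]; constructor <;> linarith
      rw [abs_le] at q
      constructor <;> linarith [a.1, a.2, q.1, q.2]
    · have a := A (2 * R) (by linarith) (by linarith)
      rw [hlog _ (by linarith), show 2 * R / R = 2 by field_simp] at a
      rw [kb_split M α χ hM hχ (2 * R) r (by linarith) hr0, kb_last M α R χ hR0 h1' r h]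
      have e : Real.log (r / (2 * R)) = Real.log (r / R) - Real.log 2 := by
        rw [Real.log_div hr0.ne' (by positivity), Real.log_div hr0.ne' hR0.ne',
          Real.log_mul (by norm_num) hR0.ne']
        ring
      rw [e]
      have q0 : 0 ≤ α * Real.log 2 := by positivity
      have q1 : α * Real.log 2 ≤ 2 * Real.log 2 := by gcongr
      constructor <;> linarith [a.1, a.2]
end

section
/- Let M > 0 and a ∈ [0, M), set r_H := M + √(M² − a²), and let r > r_H and θ ∈ ℝ with sin θ ≠ 0. With Δ := r² + a² − 2Mr, q² := r² + a² (cos θ)², Σ² := (r² + a²)² − a² (sin θ)² Δ, define g_tt := −(Δ − a² (sin θ)²)/q², g_tφ := −2 a M r (sin θ)²/q², g_φφ := Σ² (sin θ)²/q². Then there exists c ∈ ℝ such that g_tt + 2c·g_tφ + c²·g_φφ < 0. -/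
/-- At every point of the domain of outer communication of Kerr off the axis, some
combination `T + cZ` of the stationary and axial Killing fields is timelike: with
`r_H = M + √(M² − a²)`, `r > r_H`, `sin θ ≠ 0`, there is `c ∈ ℝ` with
`g_tt + 2c g_tφ + c² g_φφ < 0`. -/
theorem timelike_combination_in_DOC (M a r θ rH Δ q2 Sig2 gtt gtphi gphiphi : ℝ)
    (hM : 0 < M) (ha : a ∈ Set.Ico (0 : ℝ) M)
    (hrH : rH = M + Real.sqrt (M ^ 2 - a ^ 2))
    (hr : rH < r) (hsin : Real.sin θ ≠ 0)
    (hΔ : Δ = r ^ 2 + a ^ 2 - 2 * M * r)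
    (hq : q2 = r ^ 2 + a ^ 2 * (Real.cos θ) ^ 2)
    (hSig : Sig2 = (r ^ 2 + a ^ 2) ^ 2 - a ^ 2 * (Real.sin θ) ^ 2 * Δ)
    (hgtt : gtt = -(Δ - a ^ 2 * (Real.sin θ) ^ 2) / q2)
    (hgtphi : gtphi = -(2 * a * M * r * (Real.sin θ) ^ 2) / q2)
    (hgphiphi : gphiphi = Sig2 * (Real.sin θ) ^ 2 / q2) :
    ∃ c : ℝ, gtt + 2 * c * gtphi + c ^ 2 * gphiphi < 0 := by
  obtain ⟨ha0, haM⟩ := ha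
  have hs0 := Real.sqrt_nonneg (M ^ 2 - a ^ 2)
  have hs1 : Real.sqrt (M ^ 2 - a ^ 2) ^ 2 = M ^ 2 - a ^ 2 := Real.sq_sqrt (by nlinarith)
  have hrM : Real.sqrt (M ^ 2 - a ^ 2) < r - M := by linarith
  have hΔpos : 0 < Δ := by
    rw [hΔ]
    nlinarith
  have hr0 : 0 < r := by linarith
  have hqpos : 0 < q2 := by
    rw [hq]
    positivity
  have hR : 0 < r ^ 2 + a ^ 2 := by positivity
  have hcos : Real.cos θ ^ 2 = 1 - Real.sin θ ^ 2 := Real.cos_sq' θ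
  refine ⟨a / (r ^ 2 + a ^ 2), ?_⟩
  have key : ∀ c : ℝ, gtt + 2 * c * gtphi + c ^ 2 * gphiphi =
      (-(Δ * (1 - a * Real.sin θ ^ 2 * c) ^ 2)
        + Real.sin θ ^ 2 * (a - (r ^ 2 + a ^ 2) * c) ^ 2) / q2 := by
    intro c
    rw [hgtt, hgtphi, hgphiphi, hSig, eq_div_iff hqpos.ne']
    field_simp
    rw [hΔ]
    ring
  have h1 : a - (r ^ 2 + a ^ 2) * (a / (r ^ 2 + a ^ 2)) = 0 := by
    field_simp
    ring
  have h2 : 1 - a * Real.sin θ ^ 2 * (a / (r ^ 2 + a ^ 2)) = q2 / (r ^ 2 + a ^ 2) := by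
    rw [hq, hcos]
    field_simp
    ring
  rw [key, h1, h2]
  apply div_neg_of_neg_of_pos _ hqpos
  have : 0 < Δ * (q2 / (r ^ 2 + a ^ 2)) ^ 2 := by positivity
  linarith
end
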